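/- arXiv:2207.08440 — 2 statements merged into one kernel-verified Lean document; each statement's English description precedes it below -/
import Mathlib

section
/- Let N ≥ 2. For each r ∈ (0,∞) there exists a decreasing sequence {t_n}_{n=1}^∞ ⊂ (0,1) converging to zero which belongs to ℓ^{r,∞}(ℕ) such that for every s < s₀ := min{ r/(((N+1)/N)r + 1), N/(2(N+1)) } there is NO constant C with ‖ sup_{n ∈ ℕ} |e^{i t_n Δ}f| ‖_{L²(B(0,1))} ≤ C ‖f‖_{H^s(ℝ^N)} for all f ∈ H^s(ℝ^N). -/
/-!
The estimate fails because of constructive interference on a lattice of frequencies; no Gauss sums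
are needed. Put `N = d + 1`. By monotonicity of weak `ℓ^r` one may assume `r ≤ N / (N + 1)`.
For a large integer `K` set `W = K ^ (N / r)`, `L = W K ^ N`, `R = L K`, and let `f̂` be the
indicator function of a set `A` of frequencies of size `O(R)`:
* the first coordinate runs through an interval of length `≈ W` around a small multiple `m` of `R`;
* every other coordinate runs through unit-size intervals around `θ_j + L ℓ`, where `ℓ` is a natural
  number below a small multiple of `K`, and `θ_j = (L / 2) K ^ (-j)`.

The times used are `t = 2 π a / L ^ 2` with `a ≈ K ^ (2 N)` a natural number. There are about
`K ^ (2 N) = (W ^ 2) ^ r` of them, all of size `≈ W ^ (-2)`, which is what weak `ℓ^r` allows, and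
`exists_times` strings the blocks for `K = 2 ^ k` together into one decreasing sequence.
At such a time `t L ^ 2 ℓ ^ 2` is a multiple of `2 π`, so in the coordinates `j ≥ 1` the phase
`x_j ξ_j + t ξ_j ^ 2` is essentially constant modulo `2 π` as soon as
`L x_j / (2 π) + a / K ^ j` is within `O(1 / K)` of an integer (`lattice_phase`). In the first
coordinate the phase is essentially constant if `x_0 + 2 t m = O(1 / W)` (`first_phase`), which
leaves a window of `K ^ (N - 1)` consecutive values of `a`. Writing `a` in base `K` shows that such
a window always contains an `a` which works for all `j` simultaneously (`exists_digit_shift`).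
Hence `sup_n |e^{i t_n Δ} f| ≥ |A| / 2` on a box `E` of volume `≈ R / W ^ 2`, and the maximal
estimate would give `|E| |A| ≲ R ^ (2 s)` (`core`). Here `|E| |A| ≈ K ^ (2 N)`
while `R ^ (2 s) = K ^ (2 s (N / r + N + 1))`, so `K → ∞` rules out
`s < N / (N / r + N + 1) = r / ((N + 1) r / N + 1)`.
-/

open MeasureTheory Real Filter

noncomputable section

/-- The Schrödinger evolution `e^{itΔ}f`, expressed through the Fourier transform
`fhat` of the initial datum:  `e^{itΔ}f(x) = ∫ e^{i(x·ξ + t|ξ|²)} f̂(ξ) dξ`. -/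
def schrodingerEvol {N : ℕ} (fhat : EuclideanSpace ℝ (Fin N) → ℂ) (t : ℝ)
    (x : EuclideanSpace ℝ (Fin N)) : ℂ :=
  ∫ ξ : EuclideanSpace ℝ (Fin N),
    Complex.exp (Complex.I * (((∑ i, x i * ξ i) + t * ‖ξ‖ ^ 2 : ℝ) : ℂ)) * fhat ξ

/-- The squared `H^s` norm, expressed through the Fourier transform. -/
def sobolevNormSq {N : ℕ} (s : ℝ) (fhat : EuclideanSpace ℝ (Fin N) → ℂ) : ℝ :=
  ∫ ξ : EuclideanSpace ℝ (Fin N), (1 + ‖ξ‖ ^ 2) ^ s * ‖fhat ξ‖ ^ 2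

/-- Membership of a sequence in `ℓ^{r,∞}(ℕ)`:
`sup_{b>0} b^r · #{n : t_n > b} < ∞`. -/
def weakLr (r : ℝ) (t : ℕ → ℝ) : Prop :=
  ∃ A : ℝ, ∀ b : ℝ, 0 < b → b ^ r * (Nat.card {n : ℕ | b < t n} : ℝ) ≤ A

/-! ### Digit expansions -/

/-- Any `K ^ d` consecutive integers contain an `a` whose shifts `a / K ^ (j + 1)`, `j < d`, bring all
the given numbers `y j` within `1 / K` of integers: the successive base-`K` digits of `a` are chosen
one after the other, each digit leaving the earlier fractional parts unchanged. -/
theorem exists_digit_shift (K : ℕ) (hK : 1 ≤ K) (y : ℕ → ℝ) (a₀ d : ℕ) :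
    ∃ a : ℕ, a₀ ≤ a ∧ a < a₀ + K ^ d ∧
      ∀ j < d, ∃ z : ℤ, |y j + a / (K : ℝ) ^ (j + 1) - z| ≤ 1 / K := by
  have hK0 : (0 : ℝ) < K := by exact_mod_cast hK
  induction d with
  | zero => exact ⟨a₀, le_rfl, by simp, by simp⟩
  | succ d ih =>
    obtain ⟨a, h1, h2, h3⟩ := ih
    set w : ℝ := y d + a / (K : ℝ) ^ (d + 1) with hw
    -- the new digit is `n` reduced modulo `K`
    set n : ℤ := ⌈-(K * w)⌉ with hn
    have hKz : (0 : ℤ) < K := by exact_mod_cast hK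
    obtain ⟨c, hc⟩ := Int.eq_ofNat_of_zero_le (Int.emod_nonneg n hKz.ne')
    have hcK : c < K := by
      have := Int.emod_lt_of_pos n hKz
      omega
    have hdiv : (n : ℝ) = c + K * ((n / K : ℤ) : ℝ) := by
      have := Int.emod_add_mul_ediv n K
      rw [hc] at this
      exact_mod_cast this.symm
    refine ⟨a + c * K ^ d, by omega, ?_, ?_⟩
    · have : c * K ^ d + K ^ d ≤ K ^ (d + 1) := by
        rw [pow_succ, ← Nat.succ_mul, mul_comm]
        exact Nat.mul_le_mul_left _ hcK
      omega
    · intro j hj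
      rcases Nat.lt_succ_iff_lt_or_eq.mp hj with hj | rfl
      · obtain ⟨z, hz⟩ := h3 j hj
        refine ⟨z + c * K ^ (d - (j + 1)), ?_⟩
        have : (K : ℝ) ^ d = K ^ (d - (j + 1)) * K ^ (j + 1) := by
          rw [← pow_add]; congr 1; omega
        push_cast
        rw [this]
        convert hz using 2
        field_simp
        ring
      · refine ⟨-(n / K : ℤ), ?_⟩
        have e : y j + ((a + c * K ^ j : ℕ) : ℝ) / (K : ℝ) ^ (j + 1) - ((-(n / K : ℤ) : ℤ) : ℝ)
            = (K * w + n) / K := by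
          rw [hdiv, hw]
          push_cast
          field_simp
          ring
        rw [e, abs_div, abs_of_pos hK0]
        gcongr
        rw [abs_le]
        constructor <;> linarith [Int.le_ceil (-(K * w)), Int.ceil_lt_add_one (-(K * w))]

/-! ### Phases in a single coordinate -/

/-- In the first coordinate the phase is stationary to first order: it differs little from its value at
the central frequency `m` when the group-velocity condition `x + 2 t m = O(1 / W)` holds. -/
theorem first_phase {m W η x t ξ : ℝ} (hη0 : 0 ≤ η) (hW : 0 < W)
    (hη : η ≤ 1 / 100)
    (hx : |x + 2 * t * m| ≤ 4 * π * η / W) (ht0 : 0 ≤ t) (ht : t ≤ 8 * π / W ^ 2)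
    (hξ : |ξ - m| ≤ η * W) :
    |x * ξ + t * ξ ^ 2 - (x * m + t * m ^ 2)| ≤ 100 * η := by
  have e : x * ξ + t * ξ ^ 2 - (x * m + t * m ^ 2)
      = (ξ - m) * (x + 2 * t * m) + t * (ξ - m) ^ 2 := by ring
  have h1 : |(ξ - m) * (x + 2 * t * m)| ≤ (η * W) * (4 * π * η / W) := by
    rw [abs_mul]; gcongr
  have h2 : |t * (ξ - m) ^ 2| ≤ (8 * π / W ^ 2) * (η * W) ^ 2 := by
    rw [abs_mul, abs_of_nonneg ht0, abs_pow]; gcongr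
  have h3 : (η * W) * (4 * π * η / W) = 4 * π * η * η := by field_simp
  have h4 : (8 * π / W ^ 2) * (η * W) ^ 2 = 8 * π * η * η := by field_simp
  rw [e]
  refine (abs_add_le _ _).trans ?_
  have := pi_lt_four
  have h5 : 12 * π * η * η ≤ 12 * 4 * η * 1 := by
    have := pi_pos
    gcongr
    linarith
  nlinarith

/-- Near the lattice `θ + L ℕ` the phase at time `t = 2 π a / L ^ 2` is, modulo `2 π`, almost
independent of the frequency: the quadratic term `t L ^ 2 ℓ ^ 2` is a multiple of `2 π`, and the
linear term is one up to a small error by the hypothesis on the distance to `z`. -/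
theorem lattice_phase {K W L R η x t θ ξ : ℝ} {a ℓ : ℕ} {z : ℤ} (hη0 : 0 ≤ η) (hK : 1 ≤ K)
    (hη : η ≤ 1 / 100) (hL : 0 < L) (hR : R = L * K) (hRW : R ≤ W ^ 2) (hW : 1 ≤ W)
    (hx : |x| ≤ 1) (ht : t = 2 * π * a / L ^ 2) (ht8 : t ≤ 8 * π / W ^ 2)
    (hθ0 : 0 ≤ θ) (hθ : θ ≤ L / 2)
    (hz : |L * x / (2 * π) + 2 * a * θ / L - z| ≤ 1 / K)
    (hℓ : ℓ < η * K) (hξ : |ξ - (θ + L * ℓ)| ≤ η) :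
    ∃ z : ℤ, |x * ξ + t * ξ ^ 2 - (x * θ + t * θ ^ 2) - 2 * π * z| ≤ 100 * η := by
  have hπ := pi_pos
  have hπ4 : π < 3.15 := pi_lt_d2
  refine ⟨ℓ * z + a * ℓ ^ 2, ?_⟩
  set p := θ + L * ℓ with hp
  have ht0 : 0 ≤ t := by rw [ht]; positivity
  have e : x * ξ + t * ξ ^ 2 - (x * θ + t * θ ^ 2) - 2 * π * ((ℓ * z + a * ℓ ^ 2 : ℤ) : ℝ)
      = 2 * π * (ℓ * (L * x / (2 * π) + 2 * a * θ / L - z))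
        + ((ξ - p) * (x + 2 * (t * p)) + t * (ξ - p) ^ 2) := by
    have hta : (a : ℝ) = t * L ^ 2 / (2 * π) := by rw [ht]; field_simp
    push_cast
    rw [hta, hp]
    field_simp
    ring
  have hp0 : 0 ≤ p := by positivity
  have hpR : p ≤ R := by
    rw [hR, hp]
    have : L * ℓ ≤ L * (η * K) := by gcongr
    nlinarith [mul_le_mul_of_nonneg_left hK hL.le, mul_le_mul_of_nonneg_right hη (mul_pos hL (by linarith : 0 < K)).le]
  have htp : t * p ≤ 8 * π := by
    calc t * p ≤ 8 * π / W ^ 2 * W ^ 2 := by gcongr; linarith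
      _ = 8 * π := by field_simp
  have htp0 : 0 ≤ t * p := by positivity
  have h1 : |2 * π * (ℓ * (L * x / (2 * π) + 2 * a * θ / L - z))| ≤ 2 * π * η := by
    rw [abs_mul, abs_of_pos (by positivity : 0 < 2 * π), abs_mul, Nat.abs_cast]
    gcongr
    calc (ℓ : ℝ) * _ ≤ (η * K) * (1 / K) := by gcongr
      _ = η := by field_simp
  have h2 : |(ξ - p) * (x + 2 * (t * p))| ≤ η * (1 + 2 * (8 * π)) := by
    rw [abs_mul]
    gcongr
    refine (abs_add_le _ _).trans ?_
    rw [abs_of_nonneg (by positivity : 0 ≤ 2 * (t * p))]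
    gcongr
  have ht8' : t ≤ 8 * π := ht8.trans (by
    apply div_le_self (by positivity); nlinarith)
  have h3 : |t * (ξ - p) ^ 2| ≤ 8 * π * (η * (1 / 100)) := by
    rw [abs_mul, abs_of_nonneg ht0, abs_pow, sq]
    gcongr
    exact hξ.trans hη
  rw [e]
  have h4 := abs_add_le (2 * π * (ℓ * (L * x / (2 * π) + 2 * a * θ / L - z))) ((ξ - p) * (x + 2 * (t * p)) + t * (ξ - p) ^ 2)
  have h5 := abs_add_le ((ξ - p) * (x + 2 * (t * p))) (t * (ξ - p) ^ 2)
  nlinarith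

/-! ### The evolution of an indicator function -/

/-- Constructive interference: if the phase is within `1` of a constant modulo `2 π` on all of `A`, the
integrand has real part at least `1 / 2` after a rotation. -/
theorem norm_evol_indicator_ge {N : ℕ} {A : Set (EuclideanSpace ℝ (Fin N))}
    (hA : MeasurableSet A) (hAfin : volume A ≠ ⊤) (t c : ℝ) (x : EuclideanSpace ℝ (Fin N))
    (h : ∀ ξ ∈ A, ∃ z : ℤ, |(∑ i, x i * ξ i) + t * ‖ξ‖ ^ 2 - c - 2 * π * z| ≤ 1) :
    volume.real A / 2 ≤ ‖schrodingerEvol (A.indicator fun _ => 1) t x‖ := by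
  have hcont : Continuous fun ξ : EuclideanSpace ℝ (Fin N) =>
      Complex.exp (Complex.I * (((∑ i, x i * ξ i) + t * ‖ξ‖ ^ 2 : ℝ) : ℂ)) := by fun_prop
  have e1 : schrodingerEvol (A.indicator fun _ => 1) t x
      = ∫ ξ in A, Complex.exp (Complex.I * (((∑ i, x i * ξ i) + t * ‖ξ‖ ^ 2 : ℝ) : ℂ)) := by
    rw [schrodingerEvol, ← integral_indicator hA]
    congr 1; ext ξ
    by_cases hξ : ξ ∈ A <;> simp [hξ]
  have hint : ∀ c : ℝ, IntegrableOn (fun ξ : EuclideanSpace ℝ (Fin N) =>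
      Complex.exp (-(Complex.I * c)) *
      Complex.exp (Complex.I * (((∑ i, x i * ξ i) + t * ‖ξ‖ ^ 2 : ℝ) : ℂ))) A := by
    intro c
    refine Measure.integrableOn_of_bounded (M := 1) hAfin
      (continuous_const.mul hcont).aestronglyMeasurable (ae_of_all _ fun ξ => ?_)
    rw [norm_mul, ← mul_neg, ← Complex.ofReal_neg, mul_comm Complex.I, mul_comm Complex.I,
      Complex.norm_exp_ofReal_mul_I, Complex.norm_exp_ofReal_mul_I, one_mul]
  have e2 : ‖schrodingerEvol (A.indicator fun _ => 1) t x‖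
      = ‖∫ ξ in A, Complex.exp (-(Complex.I * c)) *
        Complex.exp (Complex.I * (((∑ i, x i * ξ i) + t * ‖ξ‖ ^ 2 : ℝ) : ℂ))‖ := by
    rw [integral_const_mul, norm_mul, ← e1, ← mul_neg, ← Complex.ofReal_neg, mul_comm Complex.I,
      Complex.norm_exp_ofReal_mul_I, one_mul]
  rw [e2]
  refine le_trans ?_ (Complex.re_le_norm _)
  have e3 := integral_re (hint c)
  simp only [RCLike.re_to_complex] at e3
  rw [← e3]
  calc volume.real A / 2 = ∫ ξ in A, (1 / 2 : ℝ) := by simp; ring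
    _ ≤ _ := by
      refine setIntegral_mono_on (integrableOn_const hAfin) (hint c).re hA ?_
      intro ξ hξ
      obtain ⟨z, hz⟩ := h ξ hξ
      set D := (∑ i, x i * ξ i) + t * ‖ξ‖ ^ 2 - c - 2 * π * z with hD
      have : -(Complex.I * c) + Complex.I * (((∑ i, x i * ξ i) + t * ‖ξ‖ ^ 2 : ℝ) : ℂ)
          = ((D + z * (2 * π) : ℝ) : ℂ) * Complex.I := by
        rw [hD]; push_cast; ring
      rw [← Complex.exp_add, this, Complex.exp_ofReal_mul_I_re, cos_add_int_mul_two_pi]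
      have hD1 : D ^ 2 ≤ 1 := (sq_le_one_iff_abs_le_one D).2 hz
      linarith [one_sub_sq_div_two_le_cos (x := D)]

theorem norm_evol_indicator_le {N : ℕ} {A : Set (EuclideanSpace ℝ (Fin N))}
    (hA : MeasurableSet A) (t : ℝ) (x : EuclideanSpace ℝ (Fin N)) :
    ‖schrodingerEvol (A.indicator fun _ => 1) t x‖ ≤ volume.real A := by
  refine (norm_integral_le_integral_norm _).trans_eq ?_
  rw [← integral_indicator_one hA]
  congr 1; ext ξ
  rw [norm_mul, mul_comm Complex.I, Complex.norm_exp_ofReal_mul_I]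
  by_cases hξ : ξ ∈ A <;> simp [hξ]

theorem continuous_evol_indicator {N : ℕ} {A : Set (EuclideanSpace ℝ (Fin N))}
    (hA : MeasurableSet A) (hAfin : volume A ≠ ⊤) (t : ℝ) :
    Continuous (schrodingerEvol (A.indicator fun _ => 1) t) := by
  refine continuous_of_dominated (bound := A.indicator fun _ => 1) ?_ ?_ ?_ ?_
  · intro x
    exact (Continuous.aestronglyMeasurable (by fun_prop)).mul
      ((measurable_const.indicator hA).aestronglyMeasurable)
  · intro x
    refine ae_of_all _ fun ξ => ?_
    rw [norm_mul, mul_comm Complex.I, Complex.norm_exp_ofReal_mul_I]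
    by_cases hξ : ξ ∈ A <;> simp [hξ]
  · exact (integrable_indicator_iff hA).2 (integrableOn_const hAfin)
  · refine ae_of_all _ fun ξ => ?_
    fun_prop

/-! ### Boxes and combs of intervals -/

theorem volume_real_box {N : ℕ} (S : Fin N → Set ℝ) :
    volume.real {x : EuclideanSpace ℝ (Fin N) | ∀ i, x i ∈ S i} = ∏ i, volume.real (S i) := by
  have := (EuclideanSpace.volume_preserving_symm_measurableEquiv_toLp (Fin N)).measure_preimage_equiv
    (Set.univ.pi S)
  rw [volume_pi_pi] at this
  rw [measureReal_def]
  simp only [measureReal_def, ← ENNReal.toReal_prod, ← this]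
  congr 2
  ext x
  simp

theorem measurableSet_box {N : ℕ} (S : Fin N → Set ℝ) (hS : ∀ i, MeasurableSet (S i)) :
    MeasurableSet {x : EuclideanSpace ℝ (Fin N) | ∀ i, x i ∈ S i} := by
  rw [Set.ofPred_forall]
  exact MeasurableSet.iInter fun i => (by fun_prop : Measurable fun x : EuclideanSpace ℝ (Fin N) => x i) (hS i)

/-- The union of the intervals of half-length `η` around `θ + L ℓ`, where `ℓ` runs through the natural
numbers below `b` (equivalently below `⌈b⌉₊`). -/
def comb (θ L η b : ℝ) : Set ℝ :=
  ⋃ ℓ ∈ Finset.range ⌈b⌉₊, Set.Icc (θ + L * (ℓ : ℕ) - η) (θ + L * ℓ + η)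

theorem mem_comb {θ L η b ξ : ℝ} :
    ξ ∈ comb θ L η b ↔ ∃ ℓ : ℕ, (ℓ : ℝ) < b ∧ |ξ - (θ + L * ℓ)| ≤ η := by
  simp only [comb, Set.mem_iUnion, Finset.mem_range, Nat.lt_ceil, Set.mem_Icc, exists_prop, abs_le]
  refine exists_congr fun ℓ => and_congr_right fun _ => ⟨fun h => ?_, fun h => ?_⟩ <;>
    constructor <;> linarith [h.1, h.2]

theorem measurableSet_comb (θ L η b : ℝ) : MeasurableSet (comb θ L η b) :=
  Finset.measurableSet_biUnion _ fun _ _ => measurableSet_Icc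

theorem volume_real_comb_ge {θ L η b : ℝ} (hη : 0 ≤ η) (hL : 2 * η < L) :
    b * (2 * η) ≤ volume.real (comb θ L η b) := by
  rw [comb, measureReal_biUnion_finset (h := fun _ _ => measure_Icc_lt_top.ne)]
  · simp only [Real.volume_real_Icc]
    have : ∀ ℓ : ℕ, max (θ + L * (ℓ : ℕ) + η - (θ + L * ℓ - η)) 0 = 2 * η := by
      intro ℓ
      rw [max_eq_left] <;> linarith
    simp only [this, Finset.sum_const, Finset.card_range, nsmul_eq_mul]
    gcongr
    exact Nat.le_ceil b
  · intro i _ j _ hij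
    refine Set.disjoint_left.2 fun ξ h1 h2 => hij ?_
    simp only [Set.mem_Icc] at h1 h2
    have hL0 : 0 < L := by linarith
    by_contra hne
    rcases lt_or_gt_of_ne hne with h | h
    · have : (i : ℝ) + 1 ≤ j := by exact_mod_cast h
      nlinarith
    · have : (j : ℝ) + 1 ≤ i := by exact_mod_cast h
      nlinarith
  · intro _ _; exact measurableSet_Icc

/-! ### The maximal estimate tested on the example -/

/-- If all points of `E` see constructive interference from `A` at some time of the sequence, the
maximal estimate applied to `f̂ = 1_A` bounds the product of the two volumes. -/
theorem measure_bound {N : ℕ} {A E : Set (EuclideanSpace ℝ (Fin N))} {t : ℕ → ℝ} {s σ C M : ℝ}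
    (hA : MeasurableSet A) (hA0 : 0 < volume.real A) (hE : MeasurableSet E)
    (hEball : E ⊆ Metric.ball 0 1)
    (hsσ : s ≤ σ) (hσ : 0 ≤ σ) (hM : ∀ ξ ∈ A, 1 + ‖ξ‖ ^ 2 ≤ M)
    (hmain : ∀ x ∈ E, ∃ n, ∃ c : ℝ, ∀ ξ ∈ A, ∃ z : ℤ,
      |(∑ i, x i * ξ i) + t n * ‖ξ‖ ^ 2 - c - 2 * π * z| ≤ 1)
    (hC : ∀ fhat : EuclideanSpace ℝ (Fin N) → ℂ,
          Integrable (fun ξ : EuclideanSpace ℝ (Fin N) => (1 + ‖ξ‖ ^ 2) ^ s * ‖fhat ξ‖ ^ 2) →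
          Real.sqrt (∫ x in Metric.ball (0 : EuclideanSpace ℝ (Fin N)) 1,
              (⨆ n : ℕ, ‖schrodingerEvol fhat (t n) x‖) ^ 2) ≤
            C * Real.sqrt (sobolevNormSq s fhat)) :
    volume.real E * volume.real A ≤ 4 * C ^ 2 * M ^ σ := by
  have hAfin : volume A ≠ ⊤ := fun h => by simp [measureReal_def, h] at hA0
  have hbase : ∀ ξ : EuclideanSpace ℝ (Fin N), 1 ≤ 1 + ‖ξ‖ ^ 2 := fun ξ => by
    linarith [sq_nonneg ‖ξ‖]
  have hwle : ∀ ξ ∈ A, (1 + ‖ξ‖ ^ 2) ^ s ≤ M ^ σ := fun ξ hξ =>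
    (Real.rpow_le_rpow_of_exponent_le (hbase ξ) hsσ).trans
      (Real.rpow_le_rpow (by linarith [hbase ξ]) (hM ξ hξ) hσ)
  have hweight : (fun ξ : EuclideanSpace ℝ (Fin N) =>
      (1 + ‖ξ‖ ^ 2) ^ s * ‖A.indicator (fun _ => (1 : ℂ)) ξ‖ ^ 2)
      = A.indicator fun ξ => (1 + ‖ξ‖ ^ 2) ^ s := by
    ext ξ
    by_cases hξ : ξ ∈ A <;> simp [hξ]
  have hcont : Continuous fun ξ : EuclideanSpace ℝ (Fin N) => (1 + ‖ξ‖ ^ 2) ^ s :=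
    Continuous.rpow_const (by fun_prop) fun ξ => Or.inl (by linarith [hbase ξ])
  have hwint : IntegrableOn (fun ξ : EuclideanSpace ℝ (Fin N) => (1 + ‖ξ‖ ^ 2) ^ s) A := by
    refine Measure.integrableOn_of_bounded (M := M ^ σ) hAfin hcont.aestronglyMeasurable ?_
    refine (ae_restrict_iff' hA).2 (ae_of_all _ fun ξ hξ => ?_)
    rw [Real.norm_of_nonneg (Real.rpow_nonneg (by linarith [hbase ξ]) _)]
    exact hwle ξ hξ
  have hsob : sobolevNormSq s (A.indicator fun _ => 1) ≤ M ^ σ * volume.real A := by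
    rw [sobolevNormSq, hweight, integral_indicator hA]
    calc _ ≤ ∫ ξ in A, M ^ σ := setIntegral_mono_on hwint (integrableOn_const hAfin) hA hwle
      _ = _ := by simp [mul_comm]
  have hsob0 : 0 ≤ sobolevNormSq s (A.indicator fun _ => 1) :=
    integral_nonneg fun ξ => by positivity
  set S : EuclideanSpace ℝ (Fin N) → ℝ :=
    fun x => ⨆ n : ℕ, ‖schrodingerEvol (A.indicator fun _ => 1) (t n) x‖ with hS
  have hbdd : ∀ x, BddAbove (Set.range fun n : ℕ =>
      ‖schrodingerEvol (A.indicator fun _ => 1) (t n) x‖) := fun x =>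
    ⟨volume.real A, by rintro _ ⟨n, rfl⟩; exact norm_evol_indicator_le hA _ _⟩
  have hSmeas : Measurable S :=
    Measurable.iSup fun n => (continuous_evol_indicator hA hAfin (t n)).norm.measurable
  have hS0 : ∀ x, 0 ≤ S x := fun x => Real.iSup_nonneg fun n => norm_nonneg _
  have hSle : ∀ x, S x ≤ volume.real A := fun x =>
    ciSup_le fun n => norm_evol_indicator_le hA _ _
  have hSge : ∀ x ∈ E, volume.real A / 2 ≤ S x := fun x hx => by
    obtain ⟨n, c, h⟩ := hmain x hx
    exact (norm_evol_indicator_ge hA hAfin (t n) c x h).trans (le_ciSup (hbdd x) n)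
  have hSint : IntegrableOn (fun x => S x ^ 2) (Metric.ball 0 1) := by
    refine Measure.integrableOn_of_bounded (M := volume.real A ^ 2) measure_ball_lt_top.ne
      (hSmeas.pow_const 2).aestronglyMeasurable (ae_of_all _ fun x => ?_)
    rw [Real.norm_of_nonneg (sq_nonneg _)]
    exact pow_le_pow_left₀ (hS0 x) (hSle x) 2
  have hEfin : volume E ≠ ⊤ := ((measure_mono hEball).trans_lt measure_ball_lt_top).ne
  have hlow : volume.real E * (volume.real A / 2) ^ 2 ≤ ∫ x in Metric.ball 0 1, S x ^ 2 := by
    calc _ = ∫ x in E, (volume.real A / 2) ^ 2 := by simp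
      _ ≤ ∫ x in E, S x ^ 2 := setIntegral_mono_on (integrableOn_const hEfin)
          (hSint.mono_set hEball) hE fun x hx =>
            pow_le_pow_left₀ (by positivity) (hSge x hx) 2
      _ ≤ _ := setIntegral_mono_set hSint (ae_of_all _ fun x => sq_nonneg _)
          hEball.eventuallyLE
  have hest := hC (A.indicator fun _ => 1) (by
    rw [hweight]; exact (integrable_indicator_iff hA).2 hwint)
  have hsq : ∫ x in Metric.ball 0 1, S x ^ 2 ≤ C ^ 2 * sobolevNormSq s (A.indicator fun _ => 1) := by
    have h0 : 0 ≤ ∫ x in Metric.ball 0 1, S x ^ 2 := integral_nonneg fun x => sq_nonneg _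
    have := pow_le_pow_left₀ (Real.sqrt_nonneg _) hest 2
    rwa [mul_pow, Real.sq_sqrt h0, Real.sq_sqrt hsob0] at this
  have hfin : volume.real E * (volume.real A / 2) ^ 2 ≤ C ^ 2 * (M ^ σ * volume.real A) :=
    hlow.trans (hsq.trans (by gcongr))
  refine le_of_mul_le_mul_right ?_ hA0
  nlinarith

/-- Choice of the time for a given point `x` of the box: the first coordinate of `x` determines `a` up to
a window of length `K ^ d`, and the other coordinates select `a` inside this window. -/
theorem exists_time {d K : ℕ} {W η L R m : ℝ} {t : ℕ → ℝ} {x : EuclideanSpace ℝ (Fin (d + 1))}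
    (hK1 : (1 : ℝ) ≤ K) (hK : 1 ≤ K) (hKW : (K : ℝ) ^ (d + 2) ≤ W)
    (ht : ∀ a : ℕ, K ^ (2 * (d + 1)) < a → a ≤ 4 * K ^ (2 * (d + 1)) →
      ∃ n, t n = 2 * π * a / L ^ 2)
    (hη : η = 1 / (100 * (d + 1))) (hL : L = W * K ^ (d + 1)) (hR : R = W * K ^ (d + 2))
    (hm : m = η * R)
    (hx0 : x 0 ∈ Set.Icc (-(2 * (4 * π * m / W ^ 2))) (-(4 * π * m / W ^ 2)))
    (hx : ∀ i, |x i| ≤ 1) :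
    ∃ n, ∃ c : ℝ, ∀ ξ : EuclideanSpace ℝ (Fin (d + 1)),
      ξ 0 ∈ Set.Icc (m - η * W) (m + η * W) →
      (∀ j : Fin d, ξ j.succ ∈ comb (L / 2 / (K : ℝ) ^ ((j : ℕ) + 1)) L η (η * K)) →
      ∃ z : ℤ, |(∑ i, x i * ξ i) + t n * ‖ξ‖ ^ 2 - c - 2 * π * z| ≤ 1 := by
  have hπ := pi_pos
  have hπ4 : π < 3.15 := pi_lt_d2
  have hK0 : (0 : ℝ) < K := by linarith
  have hKd : ∀ n : ℕ, (1 : ℝ) ≤ (K : ℝ) ^ n := fun n => one_le_pow₀ hK1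
  have hW1 : 1 ≤ W := (hKd _).trans hKW
  have hW0 : 0 < W := by linarith
  have hd1 : (1 : ℝ) ≤ (d : ℝ) + 1 := by linarith [(Nat.cast_nonneg d : (0 : ℝ) ≤ d)]
  have hη0 : 0 < η := by rw [hη]; positivity
  have hη1 : η ≤ 1 / 100 := by
    rw [hη]; gcongr; linarith
  have hηd : 100 * η * (d + 1) = 1 := by rw [hη]; field_simp
  have hL1 : 1 ≤ L := by rw [hL]; exact one_le_mul_of_one_le_of_one_le hW1 (hKd _)
  have hL0 : 0 < L := by linarith
  have hRL : R = L * K := by rw [hR, hL]; ring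
  have hRW : R ≤ W ^ 2 := by rw [hR, sq]; gcongr
  have hR0 : 0 < R := by rw [hR]; positivity
  have hm0 : 0 < m := by rw [hm]; positivity
  set θ : ℕ → ℝ := fun j => L / 2 / (K : ℝ) ^ j with hθ
  have hθ0 : ∀ j, 0 ≤ θ j := fun j => by rw [hθ]; positivity
  have hθ1 : ∀ j, θ j ≤ L / 2 := fun j => div_le_self (by positivity) (hKd j)
  set ρ : ℝ := 4 * π * m / W ^ 2 with hρ
  have hLW : L ^ 2 = W ^ 2 * (K : ℝ) ^ (2 * (d + 1)) := by rw [hL]; ring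
  -- `α` is the real value of `a` for which `x 0 + 2 t m` vanishes exactly
  set α : ℝ := -x 0 * L ^ 2 / (4 * π * m) with hα
  have hα1 : (K : ℝ) ^ (2 * (d + 1)) ≤ α := by
    rw [hα, le_div_iff₀ (by positivity), hLW]
    have := mul_le_mul_of_nonneg_right (show ρ ≤ -x 0 by linarith [hx0.2])
      (by positivity : 0 ≤ W ^ 2 * (K : ℝ) ^ (2 * (d + 1)))
    refine le_trans (le_of_eq ?_) this
    rw [hρ]; field_simp
  have hα2 : α ≤ 2 * (K : ℝ) ^ (2 * (d + 1)) := by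
    rw [hα, div_le_iff₀ (by positivity), hLW]
    have := mul_le_mul_of_nonneg_right (show -x 0 ≤ 2 * ρ by linarith [hx0.1])
      (by positivity : 0 ≤ W ^ 2 * (K : ℝ) ^ (2 * (d + 1)))
    refine le_trans this (le_of_eq ?_)
    rw [hρ]; field_simp
  have hα0 : 0 ≤ α := le_trans (by positivity) hα1
  obtain ⟨a, ha1, ha2, ha3⟩ := exists_digit_shift K hK
    (fun j => if h : j < d then L * x (Fin.succ ⟨j, h⟩) / (2 * π) else 0) (⌊α⌋₊ + 1) d
  have hαa : α < a := lt_of_lt_of_le (Nat.lt_floor_add_one α) (by exact_mod_cast ha1)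
  have haα : (a : ℝ) ≤ α + (K : ℝ) ^ d := by
    have h1 : a ≤ ⌊α⌋₊ + K ^ d := by omega
    have h2 : (a : ℝ) ≤ ⌊α⌋₊ + (K : ℝ) ^ d := by exact_mod_cast h1
    linarith [Nat.floor_le hα0]
  have hKK : (K : ℝ) ^ d ≤ (K : ℝ) ^ (2 * (d + 1)) := pow_le_pow_right₀ hK1 (by omega)
  have haK : (a : ℝ) ≤ 4 * (K : ℝ) ^ (2 * (d + 1)) := by linarith [hKd (2 * (d + 1))]
  obtain ⟨n, hn⟩ := ht a (by exact_mod_cast hα1.trans_lt hαa) (by exact_mod_cast haK)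
  have ht0 : 0 ≤ t n := by rw [hn]; positivity
  have ht8 : t n ≤ 8 * π / W ^ 2 := by
    rw [hn, hLW, div_le_div_iff₀ (by positivity) (by positivity)]
    calc 2 * π * a * W ^ 2 ≤ 2 * π * (4 * (K : ℝ) ^ (2 * (d + 1))) * W ^ 2 := by gcongr
      _ = _ := by ring
  have hstat : |x 0 + 2 * t n * m| ≤ 4 * π * η / W := by
    have e : x 0 + 2 * t n * m = 4 * π * m / L ^ 2 * (a - α) := by
      rw [hn, hα]; field_simp; ring
    rw [e, abs_of_nonneg (mul_nonneg (by positivity) (by linarith))]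
    calc _ ≤ 4 * π * m / L ^ 2 * (K : ℝ) ^ d := by gcongr; linarith
      _ = 4 * π * η / W := by rw [hm, hR, hL]; field_simp; ring
  refine ⟨n, (x 0 * m + t n * m ^ 2)
    + ∑ j : Fin d, (x j.succ * θ (j + 1) + t n * θ (j + 1) ^ 2), fun ξ hξ0 hξ => ?_⟩
  have h0 : |x 0 * ξ 0 + t n * ξ 0 ^ 2 - (x 0 * m + t n * m ^ 2)| ≤ 100 * η := by
    refine first_phase hη0.le hW0 hη1 hstat ht0 ht8 ?_
    have : ξ 0 ∈ Set.Icc (m - η * W) (m + η * W) := hξ0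
    rw [abs_le]; constructor <;> linarith [this.1, this.2]
  have hj : ∀ j : Fin d, ∃ z : ℤ, |x j.succ * ξ j.succ + t n * ξ j.succ ^ 2
      - (x j.succ * θ (j + 1) + t n * θ (j + 1) ^ 2) - 2 * π * z| ≤ 100 * η := by
    intro j
    have hξj : ξ j.succ ∈ comb (L / 2 / (K : ℝ) ^ ((j : ℕ) + 1)) L η (η * K) := hξ j
    obtain ⟨ℓ, hℓ, hξℓ⟩ := mem_comb.1 hξj
    obtain ⟨z, hz⟩ := ha3 j j.2
    refine lattice_phase (z := z) hη0.le hK1 hη1 hL0 hRL hRW hW1 ?_ hn ht8 (hθ0 _) (hθ1 _) ?_ hℓ hξℓ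
    · exact hx _
    · simp only [j.2, dite_true, Fin.eta] at hz
      convert hz using 3
      simp only [hθ]
      field_simp
  choose z hz using hj
  refine ⟨∑ j, z j, ?_⟩
  have e : (∑ i, x i * ξ i) + t n * ‖ξ‖ ^ 2 - ((x 0 * m + t n * m ^ 2)
      + ∑ j : Fin d, (x j.succ * θ (j + 1) + t n * θ (j + 1) ^ 2)) - 2 * π * ((∑ j, z j : ℤ) : ℝ)
      = (x 0 * ξ 0 + t n * ξ 0 ^ 2 - (x 0 * m + t n * m ^ 2))
        + ∑ j : Fin d, (x j.succ * ξ j.succ + t n * ξ j.succ ^ 2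
          - (x j.succ * θ (j + 1) + t n * θ (j + 1) ^ 2) - 2 * π * z j) := by
    rw [EuclideanSpace.real_norm_sq_eq, Fin.sum_univ_succ, Fin.sum_univ_succ]
    push_cast
    simp only [Finset.sum_sub_distrib, Finset.sum_add_distrib, ← Finset.mul_sum]
    ring
  rw [e]
  calc _ ≤ 100 * η + ∑ j : Fin d, 100 * η :=
        (abs_add_le _ _).trans (add_le_add h0 ((Finset.abs_sum_le_sum_abs _ _).trans
          (Finset.sum_le_sum fun j _ => hz j)))
    _ = 100 * η * (d + 1) := by simp; ring
    _ ≤ 1 := hηd.le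

/-- The consequence of the maximal estimate at one scale `K`: the left side is a lower bound for the
product of the volumes of the frequency set and of the space box, the right side comes from the
`H^σ` weight on frequencies of size `O(W K ^ (d + 2))`. -/
theorem core (d K : ℕ) (W : ℝ) (hK : 1 ≤ K) (hKW : (K : ℝ) ^ (d + 2) ≤ W) (t : ℕ → ℝ)
    (ht : ∀ a : ℕ, K ^ (2 * (d + 1)) < a → a ≤ 4 * K ^ (2 * (d + 1)) →
      ∃ n, t n = 2 * π * a / (W * K ^ (d + 1)) ^ 2) {s σ C : ℝ} (hsσ : s ≤ σ) (hσ : 0 ≤ σ)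
    (hC : ∀ fhat : EuclideanSpace ℝ (Fin (d + 1)) → ℂ,
          Integrable (fun ξ : EuclideanSpace ℝ (Fin (d + 1)) =>
            (1 + ‖ξ‖ ^ 2) ^ s * ‖fhat ξ‖ ^ 2) →
          Real.sqrt (∫ x in Metric.ball (0 : EuclideanSpace ℝ (Fin (d + 1))) 1,
              (⨆ n : ℕ, ‖schrodingerEvol fhat (t n) x‖) ^ 2) ≤
            C * Real.sqrt (sobolevNormSq s fhat)) {η : ℝ} (hη : η = 1 / (100 * (d + 1))) :
    8 * π * η ^ 2 * (2 * η ^ 2 / (d + 1)) ^ d * (K : ℝ) ^ (2 * (d + 1)) ≤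
      4 * C ^ 2 * (5 * (d + 1) * (W * K ^ (d + 2)) ^ 2) ^ σ := by
  have hπ := pi_pos
  have hπ4 : π < 3.15 := pi_lt_d2
  have hK1 : (1 : ℝ) ≤ K := by exact_mod_cast hK
  have hK0 : (0 : ℝ) < K := by linarith
  have hKd : ∀ n : ℕ, (1 : ℝ) ≤ (K : ℝ) ^ n := fun n => one_le_pow₀ hK1
  have hW1 : 1 ≤ W := (hKd _).trans hKW
  have hW0 : 0 < W := by linarith
  have hd1 : (1 : ℝ) ≤ (d : ℝ) + 1 := by linarith [(Nat.cast_nonneg d : (0 : ℝ) ≤ d)]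
  have hη0 : 0 < η := by rw [hη]; positivity
  have hη1 : η ≤ 1 / 100 := by
    rw [hη]; gcongr; linarith
  have hηd : 100 * η * (d + 1) = 1 := by rw [hη]; field_simp
  set L : ℝ := W * K ^ (d + 1) with hL
  have hL1 : 1 ≤ L := by rw [hL]; exact one_le_mul_of_one_le_of_one_le hW1 (hKd _)
  have hL0 : 0 < L := by linarith
  set R : ℝ := W * K ^ (d + 2) with hR
  have hRL : R = L * K := by rw [hR, hL]; ring
  have hRW : R ≤ W ^ 2 := by rw [hR, sq]; gcongr
  have hLR : L ≤ R := by rw [hRL]; nlinarith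
  have hWR : W ≤ R := by rw [hR]; nlinarith [hKd (d + 2)]
  set m : ℝ := η * R with hm
  have hm0 : 0 < m := by rw [hm]; positivity
  set θ : ℕ → ℝ := fun j => L / 2 / (K : ℝ) ^ j with hθ
  have hθ0 : ∀ j, 0 ≤ θ j := fun j => by rw [hθ]; positivity
  have hθ1 : ∀ j, θ j ≤ L / 2 := fun j => div_le_self (by positivity) (hKd j)
  -- the set of frequencies on which the datum lives
  set SA : Fin (d + 1) → Set ℝ := Fin.cons (Set.Icc (m - η * W) (m + η * W))
    (fun j : Fin d => comb (θ (j + 1)) L η (η * K)) with hSA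
  set A : Set (EuclideanSpace ℝ (Fin (d + 1))) := {ξ | ∀ i, ξ i ∈ SA i} with hA
  -- the box of points at which the evolution is large
  set ρ : ℝ := 4 * π * m / W ^ 2 with hρ
  have hρ0 : 0 < ρ := by positivity
  have hρη : ρ ≤ 4 * π * η := by
    rw [hρ, hm, div_le_iff₀ (by positivity)]
    have : 4 * π * η * R ≤ 4 * π * η * W ^ 2 := by gcongr
    linarith
  set SE : Fin (d + 1) → Set ℝ := Fin.cons (Set.Icc (-(2 * ρ)) (-ρ))
    (fun _ : Fin d => Set.Icc (-(1 / (2 * (d + 1)) : ℝ)) (1 / (2 * (d + 1)))) with hSE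
  set E : Set (EuclideanSpace ℝ (Fin (d + 1))) := {ξ | ∀ i, ξ i ∈ SE i} with hE
  have hAmeas : MeasurableSet A := measurableSet_box _ fun i => by
    refine Fin.cases ?_ (fun j => ?_) i
    · exact measurableSet_Icc
    · exact measurableSet_comb _ _ _ _
  have hEmeas : MeasurableSet E := measurableSet_box _ fun i => by
    refine Fin.cases ?_ (fun j => ?_) i
    · exact measurableSet_Icc
    · exact measurableSet_Icc
  have hAvol : 2 * η * W * (2 * η ^ 2 * K) ^ d ≤ volume.real A := by
    rw [hA, volume_real_box, Fin.prod_univ_succ]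
    simp only [hSA, Fin.cons_zero, Fin.cons_succ, Real.volume_real_Icc]
    refine mul_le_mul (le_max_of_le_left (by linarith)) ?_ (by positivity) (by positivity)
    calc (2 * η ^ 2 * K) ^ d = ∏ j : Fin d, η * K * (2 * η) := by
          rw [Finset.prod_const, Finset.card_univ, Fintype.card_fin]; ring
      _ ≤ _ := Finset.prod_le_prod (fun _ _ => by positivity) fun j _ =>
          volume_real_comb_ge hη0.le (by linarith)
  have hEvol : ρ * (1 / (d + 1)) ^ d = volume.real E := by
    rw [hE, volume_real_box, Fin.prod_univ_succ]
    simp only [hSE, Fin.cons_zero, Fin.cons_succ, Real.volume_real_Icc, Finset.prod_const,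
      Finset.card_univ, Fintype.card_fin]
    rw [max_eq_left (by linarith), max_eq_left (by
      have : (0 : ℝ) ≤ 1 / (2 * (d + 1)) := by positivity
      linarith)]
    congr 1
    · ring
    · congr 1; field_simp; norm_num
  have hEcoord : ∀ x ∈ E, ∀ i, |x i| ≤ 1 / (2 * (d + 1)) := by
    intro x hx i
    have := hx i
    revert this
    refine Fin.cases ?_ (fun j => ?_) i
    · simp only [hSE, Fin.cons_zero, Set.mem_Icc]
      rintro ⟨h1, h2⟩
      have : 2 * ρ ≤ 1 / (2 * (d + 1)) := by
        have e : (1 : ℝ) / (2 * (d + 1)) = 50 * η := by rw [hη]; field_simp; norm_num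
        rw [e]; nlinarith
      rw [abs_le]; constructor <;> linarith
    · simp only [hSE, Fin.cons_succ, Set.mem_Icc, abs_le]
      exact id
  have hEball : E ⊆ Metric.ball 0 1 := by
    intro x hx
    rw [mem_ball_zero_iff, ← sq_lt_one_iff₀ (norm_nonneg _), EuclideanSpace.norm_sq_eq]
    calc _ ≤ ∑ i : Fin (d + 1), ((1 : ℝ) / (2 * ((d : ℝ) + 1))) ^ (2 : ℕ) := by
          refine Finset.sum_le_sum fun i _ => ?_
          rw [Real.norm_eq_abs]
          exact pow_le_pow_left₀ (abs_nonneg _) (hEcoord x hx i) 2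
      _ = 1 / (4 * ((d : ℝ) + 1)) := by
          rw [Finset.sum_const, Finset.card_univ, Fintype.card_fin, nsmul_eq_mul]
          push_cast; field_simp; norm_num
      _ < 1 := by rw [div_lt_one (by positivity)]; linarith
  have hMA : ∀ ξ ∈ A, 1 + ‖ξ‖ ^ 2 ≤ 5 * (d + 1) * R ^ 2 := by
    intro ξ hξ
    have hi : ∀ i, ‖ξ i‖ ≤ 2 * R := by
      intro i
      have := hξ i
      revert this
      refine Fin.cases ?_ (fun j => ?_) i
      · simp only [hSA, Fin.cons_zero, Set.mem_Icc]
        rintro ⟨h1, h2⟩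
        have : m ≤ R / 100 := by rw [hm]; nlinarith
        have : η * W ≤ R / 100 := by nlinarith
        rw [Real.norm_eq_abs, abs_le]; constructor <;> linarith
      · simp only [hSA, Fin.cons_succ, mem_comb]
        rintro ⟨ℓ, h1, h2⟩
        have h3 : L * ℓ ≤ L * (η * K) := by gcongr
        have h4 : L * (η * K) ≤ R / 100 := by
          rw [hRL]; nlinarith [mul_pos hL0 hK0]
        have h5 : 0 ≤ L * ℓ := by positivity
        have := hθ0 (j + 1)
        have := hθ1 (j + 1)
        rw [abs_le] at h2
        rw [Real.norm_eq_abs, abs_le]; constructor <;> linarith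
    rw [EuclideanSpace.norm_sq_eq]
    calc _ ≤ 1 + ∑ i : Fin (d + 1), (2 * R) ^ 2 := by
          gcongr with i; exact hi i
      _ = 1 + 4 * (d + 1) * R ^ 2 := by simp; ring
      _ ≤ _ := by
          have : 1 ≤ (d + 1) * R ^ 2 :=
            one_le_mul_of_one_le_of_one_le hd1 (one_le_pow₀ (by linarith))
          linarith
  have key := measure_bound hAmeas (lt_of_lt_of_le (by positivity) hAvol) hEmeas hEball hsσ hσ
    hMA ?_ hC
  · refine le_trans ?_ key
    rw [← hEvol]
    calc _ = (ρ * (1 / (d + 1)) ^ d) * (2 * η * W * (2 * η ^ 2 * K) ^ d) := by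
          rw [hρ, hm, hR]; field_simp; ring
      _ ≤ _ := by gcongr
  · intro x hx
    obtain ⟨n, c, h⟩ := exists_time hK1 hK hKW ht hη hL hR hm (hx 0) fun i =>
      (hEcoord x hx i).trans (by rw [div_le_one (by positivity)]; linarith)
    exact ⟨n, c, fun ξ hξ => h ξ (hξ 0) fun j => hξ j.succ⟩

/-! ### The sequence of times -/

/-- The times before a shift of the index. On the block `B ^ k ≤ n < B ^ (k + 1)` they form the decreasing
arithmetic progression `2 π a / (g ^ (2 k) B ^ k)` with `a = B ^ k + B ^ (k + 1) - n`. -/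
def blockSeq (B : ℕ) (g : ℝ) (n : ℕ) : ℝ :=
  2 * π / (g ^ Nat.log B n) ^ 2 * (1 + B - n / (B : ℝ) ^ Nat.log B n)

theorem blockSeq_bounds {B : ℕ} (hB : 2 ≤ B) {g : ℝ} (hg : 1 ≤ g) {n : ℕ} (hn : 1 ≤ n) :
    2 * π / (g ^ Nat.log B n) ^ 2 ≤ blockSeq B g n ∧
      blockSeq B g n ≤ 2 * π / (g ^ Nat.log B n) ^ 2 * B := by
  have hπ := pi_pos
  have h1 : B ^ Nat.log B n ≤ n := Nat.pow_log_le_self B (by omega)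
  have h2 : n < B ^ (Nat.log B n + 1) := Nat.lt_pow_succ_log_self hB n
  have h1' : (B : ℝ) ^ Nat.log B n ≤ n := by exact_mod_cast h1
  have h2' : (n : ℝ) ≤ B * (B : ℝ) ^ Nat.log B n := by
    rw [← pow_succ']; exact_mod_cast h2.le
  have hB0 : (0 : ℝ) < (B : ℝ) ^ Nat.log B n := by
    have : (0 : ℝ) < B := by exact_mod_cast (by omega : 0 < B)
    positivity
  have h3 : 1 ≤ (n : ℝ) / (B : ℝ) ^ Nat.log B n := by rwa [le_div_iff₀ hB0, one_mul]
  have h4 : (n : ℝ) / (B : ℝ) ^ Nat.log B n ≤ B := by rwa [div_le_iff₀ hB0]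
  have hc : 0 ≤ 2 * π / (g ^ Nat.log B n) ^ 2 := by positivity
  constructor
  · exact le_mul_of_one_le_right hc (by linarith)
  · exact mul_le_mul_of_nonneg_left (by linarith) hc

theorem blockSeq_anti {B : ℕ} (hB : 2 ≤ B) {g : ℝ} (hg : 1 ≤ g) (hBg : B ≤ g ^ 2) {n m : ℕ}
    (hn : 1 ≤ n) (hnm : n ≤ m) : blockSeq B g m ≤ blockSeq B g n := by
  have hπ := pi_pos
  have hg0 : 0 < g := by linarith
  have hB0 : (0 : ℝ) < B := by exact_mod_cast (by omega : 0 < B)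
  rcases (Nat.log_mono_right (b := B) hnm).eq_or_lt with h | h
  · rw [blockSeq, blockSeq, h]
    gcongr
  · refine (blockSeq_bounds hB hg (hn.trans hnm)).2.trans
      (le_trans ?_ (blockSeq_bounds hB hg hn).1)
    have h1 : g ^ (Nat.log B n + 1) ≤ g ^ Nat.log B m := pow_le_pow_right₀ hg h
    calc 2 * π / (g ^ Nat.log B m) ^ 2 * B ≤ 2 * π / (g ^ (Nat.log B n + 1)) ^ 2 * g ^ 2 := by
          gcongr
      _ = _ := by rw [pow_succ]; field_simp; ring

theorem blockSeq_le_rpow {B : ℕ} (hB : 2 ≤ B) {g r : ℝ} (hg : 1 ≤ g) (hr : 0 < r)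
    (hgB : g ^ 2 = (B : ℝ) ^ (1 / r)) {n : ℕ} (hn : 1 ≤ n) :
    blockSeq B g n ≤ 2 * π * B * (B : ℝ) ^ (1 / r) * (n : ℝ) ^ (-(1 / r)) := by
  have hπ := pi_pos
  have hB0 : (0 : ℝ) < B := by exact_mod_cast (by omega : 0 < B)
  have hn0 : (0 : ℝ) < n := by exact_mod_cast hn
  have hg0 : 0 < g := by linarith
  have h2 : n < B ^ (Nat.log B n + 1) := Nat.lt_pow_succ_log_self hB n
  have h2' : (n : ℝ) ≤ (B : ℝ) ^ (Nat.log B n + 1) := by exact_mod_cast h2.le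
  have h3 : (n : ℝ) ^ (1 / r) ≤ (B : ℝ) ^ (1 / r) * (g ^ Nat.log B n) ^ 2 := by
    calc (n : ℝ) ^ (1 / r) ≤ ((B : ℝ) ^ (Nat.log B n + 1)) ^ (1 / r) := by gcongr
      _ = ((B : ℝ) ^ (1 / r)) ^ (Nat.log B n + 1) := by
        rw [← Real.rpow_natCast, ← Real.rpow_natCast, ← Real.rpow_mul hB0.le,
          ← Real.rpow_mul hB0.le, mul_comm]
      _ = _ := by rw [pow_succ, ← hgB, ← pow_mul, ← pow_mul]; ring
  refine (blockSeq_bounds hB hg hn).2.trans ?_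
  rw [Real.rpow_neg hn0.le, ← div_eq_mul_inv, div_mul_eq_mul_div,
    div_le_div_iff₀ (by positivity) (by positivity)]
  calc 2 * π * B * (n : ℝ) ^ (1 / r) ≤ 2 * π * B * ((B : ℝ) ^ (1 / r) * (g ^ Nat.log B n) ^ 2) := by
        gcongr
    _ = _ := by ring

theorem weakLr_of_le {r D : ℝ} (hr : 0 < r) (hD : 0 < D) {t : ℕ → ℝ}
    (h : ∀ n, t n ≤ D * ((n : ℝ) + 1) ^ (-(1 / r))) : weakLr r t := by
  refine ⟨D ^ r, fun b hb => ?_⟩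
  have hsub : {n : ℕ | b < t n} ⊆ (Finset.range ⌊(D / b) ^ r⌋₊ : Set ℕ) := by
    intro n hn
    have hn' : b < D * ((n : ℝ) + 1) ^ (-(1 / r)) := lt_of_lt_of_le hn (h n)
    have hn0 : (0 : ℝ) < (n : ℝ) + 1 := by positivity
    rw [Real.rpow_neg hn0.le, ← div_eq_mul_inv, lt_div_iff₀ (by positivity), mul_comm,
      ← lt_div_iff₀ hb] at hn'
    have h1 := Real.rpow_lt_rpow (by positivity) hn' hr
    rw [← Real.rpow_mul hn0.le, one_div_mul_cancel hr.ne', Real.rpow_one] at h1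
    simp only [Finset.coe_range, Set.mem_Iio]
    have : n + 1 ≤ ⌊(D / b) ^ r⌋₊ := Nat.le_floor (by push_cast; exact h1.le)
    omega
  have hcard : (Nat.card {n : ℕ | b < t n} : ℝ) ≤ (D / b) ^ r := by
    have h1 : Nat.card {n : ℕ | b < t n} ≤ ⌊(D / b) ^ r⌋₊ := by
      have := Nat.card_mono (Finset.finite_toSet _) hsub
      simpa using this
    exact (Nat.cast_le.2 h1).trans (Nat.floor_le (by positivity))
  calc _ ≤ b ^ r * (D / b) ^ r := by gcongr
    _ = D ^ r := by rw [← Real.mul_rpow hb.le (by positivity)]; congr 1; field_simp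

theorem weakLr.mono {r r' : ℝ} {t : ℕ → ℝ} (h : weakLr r t) (hr : r ≤ r')
    (ht : ∀ n, t n < 1) : weakLr r' t := by
  obtain ⟨A, hA⟩ := h
  refine ⟨max A 0, fun b hb => ?_⟩
  rcases lt_or_ge b 1 with hb1 | hb1
  · refine le_trans ?_ ((hA b hb).trans (le_max_left _ _))
    gcongr ?_ * _
    exact Real.rpow_le_rpow_of_exponent_ge hb hb1.le hr
  · have : IsEmpty {n : ℕ | b < t n} := ⟨fun n => by
      have h1 : b < t n := n.2
      linarith [ht n]⟩
    simp

/-- The sequence of times for the exponents `r ≤ N / (N + 1)`, `N = d + 1`. It contains, for every large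
scale `K = 2 ^ k` and with `W = g ^ k`, all the times used in `core`. -/
theorem exists_times (d : ℕ) {r : ℝ} (hr : 0 < r) (hr1 : r ≤ ((d : ℝ) + 1) / (d + 2)) {g : ℝ}
    (hg : g = (2 : ℝ) ^ (((d : ℝ) + 1) / r)) :
    ∃ t : ℕ → ℝ, (∀ n, t n ∈ Set.Ioo (0 : ℝ) 1) ∧ Antitone t ∧
      Tendsto t atTop (nhds 0) ∧ weakLr r t ∧ ∃ k₀ : ℕ, ∀ k, k₀ ≤ k → ∀ a : ℕ,
        (2 ^ k) ^ (2 * (d + 1)) < a → a ≤ 4 * (2 ^ k) ^ (2 * (d + 1)) →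
        ∃ n, t n = 2 * π * a / (g ^ k * ((2 ^ k : ℕ) : ℝ) ^ (d + 1)) ^ 2 := by
  have hπ := pi_pos
  set B : ℕ := 2 ^ (2 * (d + 1)) with hB
  have hB4 : 4 ≤ B := by
    calc 4 = 2 ^ (2 * 1) := rfl
      _ ≤ B := Nat.pow_le_pow_right (by norm_num) (by omega)
  have hB2 : 2 ≤ B := by omega
  have hBr : (B : ℝ) = 2 ^ (2 * (d + 1)) := by rw [hB]; push_cast; rfl
  have hg2 : (2 : ℝ) ^ (d + 2) ≤ g := by
    rw [hg, ← Real.rpow_natCast]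
    refine Real.rpow_le_rpow_of_exponent_le (by norm_num) ?_
    rw [le_div_iff₀ hr]
    rw [le_div_iff₀ (by positivity)] at hr1
    push_cast; linarith
  have hg1 : 1 < g := lt_of_lt_of_le (one_lt_pow₀ (by norm_num) (by omega)) hg2
  have hg0 : 0 < g := by linarith
  have hBg : (B : ℝ) ≤ g ^ 2 := by
    calc (B : ℝ) ≤ ((2 : ℝ) ^ (d + 2)) ^ 2 := by
          rw [hBr, ← pow_mul]; exact pow_le_pow_right₀ (by norm_num) (by omega)
      _ ≤ _ := by gcongr
  have hgB : g ^ 2 = (B : ℝ) ^ (1 / r) := by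
    rw [hBr, hg, ← Real.rpow_natCast, ← Real.rpow_natCast, ← Real.rpow_mul (by norm_num),
      ← Real.rpow_mul (by norm_num)]
    congr 1; push_cast; ring
  -- dropping the blocks before `k₀` puts all times below `1`
  obtain ⟨k₀, hk₀⟩ : ∃ k₀ : ℕ, 2 * π * B < g ^ k₀ := pow_unbounded_of_one_lt _ hg1
  have hBk : ∀ n : ℕ, 1 ≤ n + B ^ k₀ := fun n => by
    have : 1 ≤ B ^ k₀ := Nat.one_le_pow _ _ (by omega)
    omega
  set D : ℝ := 2 * π * B * (B : ℝ) ^ (1 / r) with hD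
  have hD0 : 0 < D := by positivity
  have hpos : ∀ n, 0 < blockSeq B g (n + B ^ k₀) := fun n =>
    lt_of_lt_of_le (by positivity) (blockSeq_bounds hB2 hg1.le (hBk n)).1
  have hle : ∀ n : ℕ, blockSeq B g (n + B ^ k₀) ≤ D * ((n : ℝ) + 1) ^ (-(1 / r)) := by
    intro n
    refine (blockSeq_le_rpow hB2 hg1.le hr hgB (hBk n)).trans ?_
    refine mul_le_mul_of_nonneg_left ?_ hD0.le
    refine Real.rpow_le_rpow_of_nonpos (by positivity) ?_ (by
      have : 0 < 1 / r := by positivity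
      linarith)
    have : n + 1 ≤ n + B ^ k₀ := by have := hBk 0; omega
    exact_mod_cast this
  refine ⟨fun n => blockSeq B g (n + B ^ k₀), fun n => ⟨hpos n, ?_⟩, fun n m h => ?_, ?_,
    weakLr_of_le hr hD0 hle, k₀, fun k hk a ha1 ha2 => ?_⟩
  · refine (blockSeq_bounds hB2 hg1.le (hBk n)).2.trans_lt ?_
    have h1 : k₀ ≤ Nat.log B (n + B ^ k₀) := by
      refine Nat.le_log_of_pow_le hB2 (by omega)
    have h2 : g ^ k₀ ≤ g ^ Nat.log B (n + B ^ k₀) := pow_le_pow_right₀ hg1.le h1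
    have h3 : 1 ≤ g ^ Nat.log B (n + B ^ k₀) := one_le_pow₀ hg1.le
    rw [div_mul_eq_mul_div, div_lt_one (by positivity)]
    nlinarith
  · exact blockSeq_anti hB2 hg1.le hBg (hBk n) (by omega)
  · refine squeeze_zero (fun n => (hpos n).le) hle ?_
    rw [← mul_zero D]
    refine Tendsto.const_mul D ?_
    refine (tendsto_rpow_neg_atTop (by positivity : 0 < 1 / r)).comp ?_
    exact tendsto_atTop_add_const_right _ _ tendsto_natCast_atTop_atTop
  · -- the times with `a` in `(B ^ k, 4 * B ^ k]` all lie in the block number `k`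
    have e : (2 ^ k) ^ (2 * (d + 1)) = B ^ k := by rw [hB, ← pow_mul, ← pow_mul, mul_comm]
    rw [e] at ha1 ha2
    have h4 : 4 * B ^ k ≤ B ^ (k + 1) := by
      rw [pow_succ']; exact Nat.mul_le_mul_right _ hB4
    have hk' : B ^ k₀ ≤ B ^ k := Nat.pow_le_pow_right (by omega) hk
    refine ⟨B ^ k + B ^ (k + 1) - a - B ^ k₀, ?_⟩
    have hsub : B ^ k + B ^ (k + 1) - a - B ^ k₀ + B ^ k₀ = B ^ k + B ^ (k + 1) - a := by omega
    have hlog : Nat.log B (B ^ k + B ^ (k + 1) - a) = k :=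
      Nat.log_eq_of_pow_le_of_lt_pow (by omega) (by omega)
    simp only [hsub]
    rw [blockSeq, hlog, Nat.cast_sub (by omega)]
    have hBk0 : (0 : ℝ) < (B : ℝ) ^ k := by positivity
    have e' : (((2 ^ k : ℕ) : ℝ) ^ (d + 1)) ^ 2 = (B : ℝ) ^ k := by
      rw [hBr]; push_cast; rw [← pow_mul, ← pow_mul, ← pow_mul]; congr 1; ring
    rw [mul_pow, e']
    push_cast
    field_simp
    ring

/-! ### Comparison of exponents -/

/-- Geometric growth contradicts a bound by a slower geometric sequence. -/
theorem no_uniform_bound {c D b q G σ : ℝ} (hc : 0 < c) {k₀ : ℕ} (hg : 0 < q)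
    (hG : 0 < G) (hqb : (q ^ 2) ^ σ < b)
    (h : ∀ k, k₀ ≤ k → c * b ^ k ≤ D * (G * (q ^ k) ^ 2) ^ σ) : False := by
  set p := (q ^ 2) ^ σ with hp
  have hp0 : 0 < p := by positivity
  have hp2 : ∀ k : ℕ, (G * (q ^ k) ^ 2) ^ σ = G ^ σ * p ^ k := by
    intro k
    rw [Real.mul_rpow hG.le (by positivity), hp, ← pow_mul, mul_comm k 2, pow_mul,
      ← Real.rpow_natCast, ← Real.rpow_mul (by positivity), mul_comm (k : ℝ),
      Real.rpow_mul (by positivity), Real.rpow_natCast]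
  obtain ⟨k, hk⟩ := pow_unbounded_of_one_lt (D * G ^ σ / c) ((one_lt_div hp0).2 hqb)
  have hk' : D * G ^ σ / c < (b / p) ^ (max k k₀) :=
    hk.trans_le (pow_le_pow_right₀ ((one_lt_div hp0).2 hqb).le (le_max_left _ _))
  have := h (max k k₀) (le_max_right _ _)
  rw [hp2, ← mul_assoc] at this
  rw [div_pow, div_lt_div_iff₀ hc (by positivity)] at hk'
  linarith

theorem sharpness_maximal_estimate_schrodinger_sequence
    (N : ℕ) (hN : 2 ≤ N) (r : ℝ) (hr : 0 < r) :
    ∃ t : ℕ → ℝ, (∀ n, t n ∈ Set.Ioo (0 : ℝ) 1) ∧ Antitone t ∧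
      Tendsto t atTop (nhds 0) ∧ weakLr r t ∧
      ∀ s : ℝ,
        s < min (r / (((N : ℝ) + 1) / (N : ℝ) * r + 1)) ((N : ℝ) / (2 * ((N : ℝ) + 1))) →
        ¬ ∃ C : ℝ, ∀ fhat : EuclideanSpace ℝ (Fin N) → ℂ,
          Integrable (fun ξ : EuclideanSpace ℝ (Fin N) => (1 + ‖ξ‖ ^ 2) ^ s * ‖fhat ξ‖ ^ 2) →
          Real.sqrt (∫ x in Metric.ball (0 : EuclideanSpace ℝ (Fin N)) 1,
              (⨆ n : ℕ, ‖schrodingerEvol fhat (t n) x‖) ^ 2) ≤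
            C * Real.sqrt (sobolevNormSq s fhat) := by
  obtain ⟨d, rfl⟩ : ∃ d, N = d + 1 := ⟨N - 1, by omega⟩
  have hd : (0 : ℝ) ≤ d := Nat.cast_nonneg d
  set r₁ : ℝ := min r (((d : ℝ) + 1) / (d + 2)) with hr₁
  have hr₁0 : 0 < r₁ := lt_min hr (by positivity)
  have hr₁1 : r₁ ≤ ((d : ℝ) + 1) / (d + 2) := min_le_right _ _
  set g : ℝ := (2 : ℝ) ^ (((d : ℝ) + 1) / r₁) with hg
  have hg0 : 0 < g := by positivity
  have hg2 : (2 : ℝ) ^ (d + 2) ≤ g := by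
    rw [hg, ← Real.rpow_natCast]
    refine Real.rpow_le_rpow_of_exponent_le (by norm_num) ?_
    rw [le_div_iff₀ hr₁0]
    rw [le_div_iff₀ (by positivity)] at hr₁1
    push_cast; linarith
  obtain ⟨t, ht01, htanti, htlim, htr, k₀, htk⟩ := exists_times d hr₁0 hr₁1 hg
  refine ⟨t, ht01, htanti, htlim, htr.mono (min_le_left _ _) fun n => (ht01 n).2, ?_⟩
  rintro s hs ⟨C, hC⟩
  -- the threshold is attained at the truncated exponent `r₁`
  have hs₁ : s < r₁ / (((d : ℝ) + 2) / (d + 1) * r₁ + 1) := by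
    push_cast at hs
    rcases min_cases r (((d : ℝ) + 1) / (d + 2)) with ⟨h, _⟩ | ⟨h, _⟩
    · rw [hr₁, h, show (d : ℝ) + 2 = d + 1 + 1 by ring]
      exact hs.trans_le (min_le_left _ _)
    · rw [hr₁, h]
      refine (hs.trans_le (min_le_right _ _)).trans_eq ?_
      field_simp
      ring
  -- for negative `s` the estimate is tested against the weaker weight with exponent `0`
  set σ : ℝ := max s 0 with hσ
  have hσ₁ : σ < r₁ / (((d : ℝ) + 2) / (d + 1) * r₁ + 1) := max_lt hs₁ (by positivity)
  refine no_uniform_bound (k₀ := k₀) (q := g * 2 ^ (d + 2)) (b := 2 ^ (2 * (d + 1)))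
    (c := 8 * π * (1 / (100 * ((d : ℝ) + 1))) ^ 2 *
      (2 * (1 / (100 * ((d : ℝ) + 1))) ^ 2 / (d + 1)) ^ d)
    (D := 4 * C ^ 2) (G := 5 * (d + 1)) (σ := σ)
    (by positivity) (by positivity) (by positivity) ?_ fun k hk => ?_
  · -- the two exponents of `2` compare exactly when `σ` is below the threshold
    have e : g * 2 ^ (d + 2) = (2 : ℝ) ^ (((d : ℝ) + 1) / r₁ + (d + 2)) := by
      rw [Real.rpow_add (by norm_num), hg]
      congr 1
      rw [← Real.rpow_natCast]; push_cast; rfl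
    rw [e, ← Real.rpow_natCast, ← Real.rpow_natCast, ← Real.rpow_mul (by positivity),
      ← Real.rpow_mul (by norm_num)]
    refine Real.rpow_lt_rpow_of_exponent_lt (by norm_num) ?_
    rw [lt_div_iff₀ (by positivity)] at hσ₁
    have e2 : (((d : ℝ) + 1) / r₁ + (d + 2)) * σ
        = (d + 1) / r₁ * (σ * (((d : ℝ) + 2) / (d + 1) * r₁ + 1)) := by field_simp; ring
    have e3 : (((d : ℝ) + 1) / r₁ + (d + 2)) * σ < d + 1 := by
      rw [e2]
      calc _ < ((d : ℝ) + 1) / r₁ * r₁ := by gcongr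
        _ = d + 1 := by field_simp
    push_cast
    linarith
  · have hKW : (((2 ^ k : ℕ) : ℝ)) ^ (d + 2) ≤ g ^ k := by
      push_cast
      rw [← pow_mul, mul_comm k, pow_mul]
      gcongr
    have key := core d (2 ^ k) (g ^ k) Nat.one_le_two_pow hKW t (htk k hk)
      (le_max_left s 0) (le_max_right s 0) hC rfl
    have e1 : ((2 ^ k : ℕ) : ℝ) ^ (2 * (d + 1)) = (2 ^ (2 * (d + 1))) ^ k := by
      push_cast; rw [← pow_mul, ← pow_mul, mul_comm]
    have e2 : g ^ k * ((2 ^ k : ℕ) : ℝ) ^ (d + 2) = (g * 2 ^ (d + 2)) ^ k := by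
      push_cast; rw [mul_pow, ← pow_mul, ← pow_mul, mul_comm k]
    rwa [e1, e2] at key
end
end

section
/- Let N ≥ 2 and λ ≥ 1. There exists a constant C, depending only on N (not on f, λ, I), such that for every f ∈ L²(ℝ^N) with supp f̂ ⊂ {ξ ∈ ℝ^N : λ/2 ≤ |ξ| ≤ 2λ} and every interval I ⊂ ℝ with λ^{-2} ≤ |I| ≤ λ^{-1}, one has ‖ sup_{t ∈ I} |e^{itL}f| ‖_{L²(B(0,1))} ≤ C · λ · |I|^{1/2} · ‖f‖_{L²(ℝ^N)}. -/
/-!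
The estimate follows from Sobolev embedding in time and Plancherel in space. For fixed `x`, the
function `u(t) = e^{itL}f(x)` satisfies, for every `t ∈ I = [a, b]`,
`|u(t)|² ≤ ∫_I (|I|⁻¹ + λ²) |u|² + λ⁻² |u'|²` (`norm_sq_le_integral`). The right side does not
depend on `t`, so it bounds the square of the supremum. Integrating over the unit ball and
exchanging the integrals, Plancherel at each fixed time (`integral_norm_sq_evol`) bounds the spatial
`L²` norms: `u` contributes `(2π)^N ‖f̂‖²`, and `u'`, whose Fourier-side datum is
`i (∑ sgᵢ ξᵢ²) f̂` with `|∑ sgᵢ ξᵢ²| ≤ |ξ|² ≤ 4λ²`, contributes at most `16 λ⁴ (2π)^N ‖f̂‖²`. The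
total is `(1 + 17 λ² |I|) (2π)^N ‖f̂‖²` (`integral_sup_sq_le`), and `1 ≤ λ² |I|` absorbs the first
term, giving the constant `C² = 18 (2π)^N`.

Mathlib's Plancherel theorem concerns the Fourier transform on `L²` obtained by extension, so it is
first identified with the Fourier integral on `L¹ ∩ L²` (`fourier_toLp_ae_eq`). The datum is in `L¹`
because it has bounded support. If the datum is not measurable, the evolution vanishes identically.
-/

open MeasureTheory Real Filter

noncomputable section

/-- The nonelliptic Schrödinger evolution `e^{itL}f` with signature `sg`, expressed through
the Fourier transform `fhat` of the initial datum:
`e^{itL}f(x) = ∫ e^{i(x·ξ + t ∑ᵢ sgᵢ ξᵢ²)} f̂(ξ) dξ`. -/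
def nonellipticEvol {N : ℕ} (sg : Fin N → ℝ) (fhat : EuclideanSpace ℝ (Fin N) → ℂ) (t : ℝ)
    (x : EuclideanSpace ℝ (Fin N)) : ℂ :=
  ∫ ξ : EuclideanSpace ℝ (Fin N),
    Complex.exp (Complex.I * (((∑ i, x i * ξ i) + t * ∑ i, sg i * ξ i ^ 2 : ℝ) : ℂ)) * fhat ξ

open scoped FourierTransform ContDiff SchwartzMap

/-- On `L¹ ∩ L²` the Fourier transform defined by extension from Schwartz functions agrees almost
everywhere with the Fourier integral: both give the same result when paired with a smooth compactly
supported function, by the self-adjointness of the Fourier transform. -/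
theorem fourier_toLp_ae_eq {N : ℕ} {g : EuclideanSpace ℝ (Fin N) → ℂ} (h1 : Integrable g)
    (h2 : MemLp g 2) :
    ⇑(𝓕 (h2.toLp g) : Lp ℂ 2 (volume : Measure (EuclideanSpace ℝ (Fin N)))) =ᵐ[volume] 𝓕 g := by
  have hcont : Continuous (𝓕 g) :=
    VectorFourier.fourierIntegral_continuous Real.continuous_fourierChar
      (L := innerₗ (EuclideanSpace ℝ (Fin N))) continuous_inner h1
  have hloc : LocallyIntegrable
      (⇑(𝓕 (h2.toLp g) : Lp ℂ 2 (volume : Measure (EuclideanSpace ℝ (Fin N))))) volume :=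
    (Lp.memLp _).locallyIntegrable (by norm_num)
  refine ae_eq_of_integral_contDiff_smul_eq hloc hcont.locallyIntegrable ?_
  intro φ hφ hφc
  have hφc' : HasCompactSupport (Complex.ofRealCLM ∘ φ) := hφc.comp_left rfl
  set ψ : 𝓢(EuclideanSpace ℝ (Fin N), ℂ) :=
    hφc'.toSchwartzMap (Complex.ofRealCLM.contDiff.comp hφ) with hψ
  have hψx : ∀ x, ψ x = (φ x : ℂ) := fun x => rfl
  have key := congrArg (fun T => T ψ) (Lp.fourier_toTemperedDistribution_eq (h2.toLp g))
  simp only [TemperedDistribution.fourier_apply, Lp.toTemperedDistribution_apply] at key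
  have e1 : ∫ x, φ x • (𝓕 (h2.toLp g) : Lp ℂ 2 (volume : Measure (EuclideanSpace ℝ (Fin N)))) x =
      ∫ x, ψ x • (𝓕 (h2.toLp g) : Lp ℂ 2 (volume : Measure (EuclideanSpace ℝ (Fin N)))) x := by
    simp [hψx]
  have e2 : ∫ x, φ x • 𝓕 g x = ∫ x, ψ x • 𝓕 g x := by
    simp [hψx]
  rw [e1, e2, ← key, SchwartzMap.fourier_coe]
  have flip := VectorFourier.integral_fourierIntegral_smul_eq_flip
    (L := innerₗ (EuclideanSpace ℝ (Fin N))) (μ := volume) (ν := volume) (f := ⇑ψ) (g := g)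
    Real.continuous_fourierChar continuous_inner ψ.integrable h1
  rw [flip_innerₗ] at flip
  refine Eq.trans (integral_congr_ae ?_) flip
  filter_upwards [h2.coeFn_toLp] with x hx
  rw [hx]
  rfl

/-- Plancherel's identity for the Fourier integral on `L¹ ∩ L²`. -/
theorem integral_norm_sq_fourier {N : ℕ} {g : EuclideanSpace ℝ (Fin N) → ℂ} (h1 : Integrable g)
    (h2 : MemLp g 2) :
    Integrable (fun w => ‖𝓕 g w‖ ^ 2) ∧ ∫ w, ‖𝓕 g w‖ ^ 2 = ∫ ξ, ‖g ξ‖ ^ 2 := by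
  have hae := fourier_toLp_ae_eq h1 h2
  have hm : MemLp (𝓕 g) 2 := (memLp_congr_ae hae).1 (Lp.memLp _)
  refine ⟨hm.integrable_norm_pow (by norm_num), ?_⟩
  have hn : ∀ F : Lp ℂ 2 (volume : Measure (EuclideanSpace ℝ (Fin N))),
      ∫ x, ‖F x‖ ^ 2 = ‖F‖ ^ 2 := by
    intro F
    have := L2.inner_def (𝕜 := ℂ) F F
    rw [inner_self_eq_norm_sq_to_K] at this
    simp_rw [inner_self_eq_norm_sq_to_K] at this
    have h3 : ∫ x, (((‖F x‖ ^ 2 : ℝ)) : ℂ) = ((‖F‖ ^ 2 : ℝ) : ℂ) := by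
      rw [Complex.ofReal_pow]; simpa using this.symm
    rw [integral_complex_ofReal] at h3
    exact_mod_cast h3
  calc ∫ w, ‖𝓕 g w‖ ^ 2
      = ∫ w, ‖(𝓕 (h2.toLp g) : Lp ℂ 2 (volume : Measure (EuclideanSpace ℝ (Fin N)))) w‖ ^ 2 :=
        integral_congr_ae (hae.mono fun x hx => by simp only [hx])
    _ = ∫ w, ‖(h2.toLp g) w‖ ^ 2 := by rw [hn, hn, Lp.norm_fourier_eq]
    _ = _ := integral_congr_ae (h2.coeFn_toLp.mono fun x hx => by simp only [hx])

/-- Conservation of the `L²` norm at each fixed time. The factor `(2π)^N` comes from the absence of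
`2π` in the phase of `nonellipticEvol`, as opposed to Mathlib's `𝓕`. -/
theorem integral_norm_sq_evol {N : ℕ} (sg : Fin N → ℝ) {g : EuclideanSpace ℝ (Fin N) → ℂ}
    (h1 : Integrable g) (h2 : MemLp g 2) (t : ℝ) :
    Integrable (fun x => ‖nonellipticEvol sg g t x‖ ^ 2) ∧
    ∫ x, ‖nonellipticEvol sg g t x‖ ^ 2 = (2 * π) ^ N * ∫ ξ, ‖g ξ‖ ^ 2 := by
  set m : EuclideanSpace ℝ (Fin N) → ℂ :=
    fun ξ => Complex.exp (((t * ∑ i, sg i * ξ i ^ 2 : ℝ) : ℂ) * Complex.I) with hm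
  have hmc : Continuous m := by fun_prop
  have hm1 : ∀ ξ, ‖m ξ‖ = 1 := fun ξ => Complex.norm_exp_ofReal_mul_I _
  set h : EuclideanSpace ℝ (Fin N) → ℂ := fun ξ => m ξ * g ξ with hh
  have hn : ∀ ξ, ‖h ξ‖ = ‖g ξ‖ := fun ξ => by rw [hh]; simp [hm1]
  have hmeas : AEStronglyMeasurable h := hmc.aestronglyMeasurable.mul h1.1
  have h1' : Integrable h := h1.congr' hmeas (.of_forall fun ξ => (hn ξ).symm)
  have h2' : MemLp h 2 := (memLp_congr_norm hmeas h1.1 (.of_forall hn)).2 h2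
  obtain ⟨I1, I2⟩ := integral_norm_sq_fourier h1' h2'
  have hc : (-(2 * π)⁻¹ : ℝ) ≠ 0 := by have := pi_pos; simp
  have hev : ∀ x, nonellipticEvol sg g t x = 𝓕 h ((-(2 * π)⁻¹ : ℝ) • x) := by
    intro x
    rw [Real.fourier_eq', nonellipticEvol]
    congr 1
    ext ξ
    rw [hh, hm, smul_eq_mul, ← mul_assoc, ← Complex.exp_add, inner_smul_right]
    congr 2
    have : inner ℝ ξ x = ∑ i, x i * ξ i := by
      simp [PiLp.inner_apply]
    rw [this]
    have hpi : (-2 * π * (-(2 * π)⁻¹ * ∑ i, x i * ξ i)) = ∑ i, x i * ξ i := by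
      field_simp
    rw [hpi]
    push_cast
    ring
  simp_rw [hev]
  refine ⟨I1.comp_smul hc, ?_⟩
  rw [Measure.integral_comp_smul volume (fun w => ‖𝓕 h w‖ ^ 2), I2, finrank_euclideanSpace_fin]
  simp_rw [hn]
  have : |((-(2 * π)⁻¹) ^ N)⁻¹| = (2 * π) ^ N := by
    rw [abs_inv, abs_pow, abs_neg, abs_inv, abs_of_pos (by positivity : 0 < 2 * π)]
    rw [inv_pow, inv_inv]
  rw [this, smul_eq_mul]

/-- Differentiating the evolution in time multiplies the Fourier-side datum by `i ∑ sgᵢ ξᵢ²`. -/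
theorem hasDerivAt_evol {N : ℕ} (sg : Fin N → ℝ) {g : EuclideanSpace ℝ (Fin N) → ℂ}
    (h1 : Integrable g)
    (h1' : Integrable fun ξ : EuclideanSpace ℝ (Fin N) =>
      Complex.I * ((∑ i, sg i * ξ i ^ 2 : ℝ) : ℂ) * g ξ)
    (x : EuclideanSpace ℝ (Fin N)) (t : ℝ) :
    HasDerivAt (fun s => nonellipticEvol sg g s x)
      (nonellipticEvol sg (fun ξ : EuclideanSpace ℝ (Fin N) =>
        Complex.I * ((∑ i, sg i * ξ i ^ 2 : ℝ) : ℂ) * g ξ) t x) t := by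
  have hnorm : ∀ r : ℝ, ‖Complex.exp (Complex.I * (r : ℂ))‖ = 1 := fun r => by
    rw [mul_comm]; exact Complex.norm_exp_ofReal_mul_I _
  have hmeas : ∀ s : ℝ, AEStronglyMeasurable (fun ξ : EuclideanSpace ℝ (Fin N) =>
      Complex.exp (Complex.I * (((∑ i, x i * ξ i) + s * ∑ i, sg i * ξ i ^ 2 : ℝ) : ℂ))) :=
    fun s => Continuous.aestronglyMeasurable (by fun_prop)
  refine (hasDerivAt_integral_of_dominated_loc_of_deriv_le (μ := volume) (s := Set.univ)
    (F := fun s (ξ : EuclideanSpace ℝ (Fin N)) =>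
      Complex.exp (Complex.I * (((∑ i, x i * ξ i) + s * ∑ i, sg i * ξ i ^ 2 : ℝ) : ℂ)) * g ξ)
    (F' := fun s (ξ : EuclideanSpace ℝ (Fin N)) =>
      Complex.exp (Complex.I * (((∑ i, x i * ξ i) + s * ∑ i, sg i * ξ i ^ 2 : ℝ) : ℂ)) *
        (Complex.I * ((∑ i, sg i * ξ i ^ 2 : ℝ) : ℂ) * g ξ))
    (bound := fun ξ => ‖Complex.I * ((∑ i, sg i * ξ i ^ 2 : ℝ) : ℂ) * g ξ‖)
    univ_mem ?_ ?_ ?_ ?_ h1'.norm ?_).2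
  · exact .of_forall fun s => (hmeas s).mul h1.1
  · refine h1.congr' ((hmeas t).mul h1.1) (.of_forall fun ξ => ?_)
    rw [norm_mul, hnorm, one_mul]
  · exact (hmeas t).mul h1'.1
  · exact .of_forall fun ξ s _ => by rw [norm_mul, hnorm, one_mul]
  · refine .of_forall fun ξ s _ => ?_
    rw [← mul_assoc]
    refine HasDerivAt.mul_const ?_ _
    refine HasDerivAt.cexp ?_
    refine HasDerivAt.const_mul _ ?_
    refine HasDerivAt.ofReal_comp ?_
    simpa using ((hasDerivAt_id s).mul_const (∑ i, sg i * ξ i ^ 2)).const_add (∑ i, x i * ξ i)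

/-- Joint continuity in `(x, t)`. -/
theorem continuous_evol {N : ℕ} (sg : Fin N → ℝ) {g : EuclideanSpace ℝ (Fin N) → ℂ}
    (h1 : Integrable g) :
    Continuous fun p : EuclideanSpace ℝ (Fin N) × ℝ => nonellipticEvol sg g p.2 p.1 := by
  have hnorm : ∀ r : ℝ, ‖Complex.exp (Complex.I * (r : ℂ))‖ = 1 := fun r => by
    rw [mul_comm]; exact Complex.norm_exp_ofReal_mul_I _
  refine continuous_of_dominated (bound := fun ξ => ‖g ξ‖) (fun p => ?_) (fun p => ?_) h1.norm ?_
  · exact (Continuous.aestronglyMeasurable (by fun_prop)).mul h1.1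
  · exact .of_forall fun ξ => by rw [norm_mul, hnorm, one_mul]
  · exact .of_forall fun ξ => by fun_prop

/-- One-dimensional Sobolev inequality with a free weight `κ`: `‖u t‖² - ‖u s‖²` is the integral of
`2 Re(ū u') ≤ κ ‖u‖² + κ⁻¹ ‖u'‖²`, and averaging over `s ∈ [a, b]` gives the bound. -/
theorem norm_sq_le_integral {u u' : ℝ → ℂ} (hu : ∀ t, HasDerivAt u (u' t) t)
    (hu' : Continuous u') {a b κ : ℝ} (hab : a < b) (hκ : 0 < κ) {t : ℝ} (ht : t ∈ Set.Icc a b) :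
    ‖u t‖ ^ 2 ≤ ∫ s in Set.Icc a b, (((b - a)⁻¹ + κ) * ‖u s‖ ^ 2 + κ⁻¹ * ‖u' s‖ ^ 2) := by
  have huc : Continuous u := continuous_iff_continuousAt.2 fun t => (hu t).continuousAt
  have hII : ∀ {f : ℝ → ℝ}, Continuous f → IntegrableOn f (Set.Icc a b) := fun hf =>
    hf.continuousOn.integrableOn_compact isCompact_Icc
  set D : ℝ := ∫ s in Set.Icc a b, (κ * ‖u s‖ ^ 2 + κ⁻¹ * ‖u' s‖ ^ 2) with hD
  have hpt : ∀ s, ‖2 * inner ℝ (u s) (u' s)‖ ≤ κ * ‖u s‖ ^ 2 + κ⁻¹ * ‖u' s‖ ^ 2 := by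
    intro s
    have h3 := abs_real_inner_le_norm (u s) (u' s)
    rw [norm_mul, Real.norm_eq_abs, Real.norm_eq_abs, abs_two]
    have h4 : 0 ≤ κ⁻¹ * (κ * ‖u s‖ - ‖u' s‖) ^ 2 := by positivity
    have h5 : κ⁻¹ * (κ * ‖u s‖ - ‖u' s‖) ^ 2
        = κ * ‖u s‖ ^ 2 + κ⁻¹ * ‖u' s‖ ^ 2 - 2 * (‖u s‖ * ‖u' s‖) := by
      field_simp
      ring
    linarith
  have hdiff : ∀ s ∈ Set.Icc a b, ‖u t‖ ^ 2 ≤ ‖u s‖ ^ 2 + D := by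
    intro s hs
    have hcont : Continuous fun s => 2 * inner ℝ (u s) (u' s) := by fun_prop
    have hftc := intervalIntegral.integral_eq_sub_of_hasDerivAt
      (fun r _ => (hu r).norm_sq) (hcont.intervalIntegrable s t)
    have hle : ‖∫ r in s..t, 2 * inner ℝ (u r) (u' r)‖ ≤ D := by
      refine (intervalIntegral.norm_integral_le_integral_norm_uIoc).trans ?_
      refine (integral_mono (hcont.norm.integrableOn_uIoc)
        (Continuous.integrableOn_uIoc (by fun_prop)) hpt).trans ?_
      refine setIntegral_mono_set (hII (by fun_prop)) (.of_forall fun r => by positivity) ?_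
      exact (Set.uIoc_subset_uIcc.trans (Set.uIcc_subset_Icc hs ht)).eventuallyLE
    rw [hftc, Real.norm_eq_abs] at hle
    have := le_abs_self (‖u t‖ ^ 2 - ‖u s‖ ^ 2)
    linarith
  have hba : 0 < b - a := sub_pos.2 hab
  have hint : (b - a) * ‖u t‖ ^ 2 ≤ (∫ s in Set.Icc a b, ‖u s‖ ^ 2) + (b - a) * D := by
    have := setIntegral_mono_on (μ := volume) (hII (f := fun _ => ‖u t‖ ^ 2) continuous_const)
      (hII (f := fun s => ‖u s‖ ^ 2 + D) (by fun_prop)) measurableSet_Icc hdiff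
    rw [integral_add (hII (by fun_prop)) (hII continuous_const)] at this
    simpa [hba.le] using this
  have hsplit : ∫ s in Set.Icc a b, (((b - a)⁻¹ + κ) * ‖u s‖ ^ 2 + κ⁻¹ * ‖u' s‖ ^ 2)
      = (b - a)⁻¹ * (∫ s in Set.Icc a b, ‖u s‖ ^ 2) + D := by
    rw [hD, ← integral_const_mul, ← integral_add (hII (by fun_prop)) (hII (by fun_prop))]
    congr 1
    ext s
    ring
  rw [hsplit]
  have : (b - a)⁻¹ * ((b - a) * ‖u t‖ ^ 2)
      ≤ (b - a)⁻¹ * ((∫ s in Set.Icc a b, ‖u s‖ ^ 2) + (b - a) * D) := by gcongr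
  rw [mul_add, inv_mul_cancel_left₀ hba.ne', inv_mul_cancel_left₀ hba.ne'] at this
  exact this

/-- Multiplication by the unimodular phase preserves non-measurability, so the Bochner integral
defining the evolution takes its default value `0`. -/
theorem evol_eq_zero_of_not_aestronglyMeasurable {N : ℕ} (sg : Fin N → ℝ)
    {g : EuclideanSpace ℝ (Fin N) → ℂ} (hg : ¬ AEStronglyMeasurable g) (t : ℝ)
    (x : EuclideanSpace ℝ (Fin N)) : nonellipticEvol sg g t x = 0 := by
  refine integral_undef fun hint => hg ?_
  have hc : AEStronglyMeasurable (fun ξ : EuclideanSpace ℝ (Fin N) =>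
      Complex.exp (-(Complex.I * (((∑ i, x i * ξ i) + t * ∑ i, sg i * ξ i ^ 2 : ℝ) : ℂ)))) :=
    Continuous.aestronglyMeasurable (by fun_prop)
  refine (hc.mul hint.1).congr (.of_forall fun ξ => ?_)
  simp only [Pi.mul_apply]
  rw [← mul_assoc, ← Complex.exp_add, neg_add_cancel, Complex.exp_zero, one_mul]

/-- A square-integrable function with bounded support is integrable. The hypothesis on `g` is split
into measurability and integrability of `‖g‖²`, since the latter alone does not imply the former. -/
theorem integrable_of_sq_of_support {N : ℕ} {g : EuclideanSpace ℝ (Fin N) → ℂ} {R : ℝ}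
    (hm : AEStronglyMeasurable g) (h2 : Integrable fun ξ => ‖g ξ‖ ^ 2)
    (hs : ∀ ξ, g ξ ≠ 0 → ‖ξ‖ ≤ R) : Integrable g := by
  have hb : Integrable ((Metric.closedBall (0 : EuclideanSpace ℝ (Fin N)) R).indicator
      fun _ => (1 : ℝ)) :=
    (integrable_indicator_iff measurableSet_closedBall).2
      (continuous_const.continuousOn.integrableOn_compact (isCompact_closedBall _ _))
  refine (h2.add hb).mono' hm (.of_forall fun ξ => ?_)
  simp only [Pi.add_apply]
  by_cases h0 : g ξ = 0
  · rw [h0, norm_zero]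
    exact add_nonneg (sq_nonneg _) (Set.indicator_nonneg (fun _ _ => zero_le_one) _)
  · rw [Set.indicator_of_mem (by simpa using hs ξ h0)]
    nlinarith [sq_nonneg (‖g ξ‖ - 1), norm_nonneg (g ξ)]

theorem abs_signed_sum_sq_le {N : ℕ} {sg : Fin N → ℝ} (hsg : ∀ i, sg i = 1 ∨ sg i = -1)
    (ξ : EuclideanSpace ℝ (Fin N)) : |∑ i, sg i * ξ i ^ 2| ≤ ‖ξ‖ ^ 2 := by
  rw [EuclideanSpace.real_norm_sq_eq]
  refine (Finset.abs_sum_le_sum_abs _ _).trans (Finset.sum_le_sum fun i _ => ?_)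
  rcases hsg i with h | h <;> simp [h]

set_option maxHeartbeats 1000000 in
/-- The maximal estimate in squared form, for measurable data. The maximal function squared is
dominated by the one-dimensional Sobolev bound `norm_sq_le_integral` with weight `κ = lam²`, which
is then integrated in `x` for each fixed time by Plancherel. The time derivative costs `4 lam²`. -/
theorem integral_sup_sq_le {N : ℕ} {sg : Fin N → ℝ} (hsg : ∀ i, sg i = 1 ∨ sg i = -1)
    {lam : ℝ} (hlam : 0 < lam) {a b : ℝ} (hab : a < b) {g : EuclideanSpace ℝ (Fin N) → ℂ}
    (hm : AEStronglyMeasurable g) (h2 : Integrable fun ξ => ‖g ξ‖ ^ 2)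
    (hs : ∀ ξ, g ξ ≠ 0 → ‖ξ‖ ≤ 2 * lam) :
    ∫ x in Metric.ball (0 : EuclideanSpace ℝ (Fin N)) 1,
        (⨆ t ∈ Set.Icc a b, ‖nonellipticEvol sg g t x‖) ^ 2 ≤
      (1 + 17 * (lam ^ 2 * (b - a))) * ((2 * π) ^ N * ∫ ξ, ‖g ξ‖ ^ 2) := by
  have h1 : Integrable g := integrable_of_sq_of_support hm h2 hs
  have hL2 : MemLp g 2 := (memLp_two_iff_integrable_sq_norm hm).2 h2
  -- `g'` is the Fourier-side datum whose evolution is the time derivative of that of `g`.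
  set g' : EuclideanSpace ℝ (Fin N) → ℂ :=
    fun ξ => Complex.I * ((∑ i, sg i * ξ i ^ 2 : ℝ) : ℂ) * g ξ with hg'
  have hm' : AEStronglyMeasurable g' :=
    (Continuous.aestronglyMeasurable (by fun_prop)).mul hm
  have hle : ∀ ξ, ‖g' ξ‖ ≤ 4 * lam ^ 2 * ‖g ξ‖ := by
    intro ξ
    by_cases h0 : g ξ = 0
    · simp [hg', h0]
    · have e : ‖g' ξ‖ = |∑ i, sg i * ξ i ^ 2| * ‖g ξ‖ := by
        rw [hg', norm_mul, norm_mul, Complex.norm_I, one_mul, Complex.norm_real, Real.norm_eq_abs]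
      rw [e]
      gcongr
      refine (abs_signed_sum_sq_le hsg ξ).trans ?_
      have := hs ξ h0
      nlinarith [norm_nonneg ξ]
  have h1' : Integrable g' := (h1.norm.const_mul (4 * lam ^ 2)).mono' hm' (.of_forall hle)
  have hL2' : MemLp g' 2 := hL2.of_le_mul hm' (.of_forall hle)
  have hsq' : ∫ ξ, ‖g' ξ‖ ^ 2 ≤ 16 * lam ^ 4 * ∫ ξ, ‖g ξ‖ ^ 2 := by
    rw [← integral_const_mul]
    refine integral_mono ((memLp_two_iff_integrable_sq_norm hm').1 hL2') (h2.const_mul _) ?_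
    intro ξ
    calc ‖g' ξ‖ ^ 2 ≤ (4 * lam ^ 2 * ‖g ξ‖) ^ 2 := by gcongr; exact hle ξ
      _ = 16 * lam ^ 4 * ‖g ξ‖ ^ 2 := by ring
  set B := Metric.ball (0 : EuclideanSpace ℝ (Fin N)) 1 with hB
  set c : ℝ := (b - a)⁻¹ + lam ^ 2 with hc
  have hba : 0 < b - a := sub_pos.2 hab
  have hc0 : 0 ≤ c := by positivity
  set H : EuclideanSpace ℝ (Fin N) → ℝ → ℝ := fun x s =>
    c * ‖nonellipticEvol sg g s x‖ ^ 2 + (lam ^ 2)⁻¹ * ‖nonellipticEvol sg g' s x‖ ^ 2 with hH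
  have hH0 : ∀ x s, 0 ≤ H x s := fun x s => by positivity
  have hHc : Continuous (Function.uncurry H) := by
    have c1 := continuous_evol sg h1
    have c2 := continuous_evol sg h1'
    exact ((c1.norm.pow 2).const_mul c).add ((c2.norm.pow 2).const_mul _)
  have hHint : Integrable (Function.uncurry H)
      ((volume.restrict B).prod (volume.restrict (Set.Icc a b))) := by
    rw [Measure.prod_restrict, ← Measure.volume_eq_prod]
    exact (hHc.continuousOn.integrableOn_compact
      ((isCompact_closedBall 0 1).prod isCompact_Icc)).mono_set
      (Set.prod_mono Metric.ball_subset_closedBall subset_rfl)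
  have hsup : ∀ x, (⨆ t ∈ Set.Icc a b, ‖nonellipticEvol sg g t x‖) ^ 2
      ≤ ∫ s in Set.Icc a b, H x s := by
    intro x
    have hn : 0 ≤ ⨆ t ∈ Set.Icc a b, ‖nonellipticEvol sg g t x‖ :=
      Real.iSup_nonneg fun t => Real.iSup_nonneg fun _ => norm_nonneg _
    refine (Real.le_sqrt hn (integral_nonneg fun s => hH0 x s)).1 ?_
    refine Real.iSup_le (fun t => Real.iSup_le (fun ht => ?_) (Real.sqrt_nonneg _))
      (Real.sqrt_nonneg _)
    refine Real.le_sqrt_of_sq_le ?_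
    have hcont : Continuous fun s => nonellipticEvol sg g' s x :=
      (continuous_evol sg h1').comp (Continuous.prodMk_right x)
    have hpos : 0 < lam ^ 2 := by positivity
    exact norm_sq_le_integral (u := fun s => nonellipticEvol sg g s x)
      (u' := fun s => nonellipticEvol sg g' s x)
      (fun s => hasDerivAt_evol sg h1 h1' x s) hcont hab hpos ht
  have hslice : ∀ s, ∫ x in B, H x s ≤
      (c + 16 * lam ^ 2) * ((2 * π) ^ N * ∫ ξ, ‖g ξ‖ ^ 2) := by
    intro s
    obtain ⟨i1, e1⟩ := integral_norm_sq_evol sg h1 hL2 s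
    obtain ⟨i2, e2⟩ := integral_norm_sq_evol sg h1' hL2' s
    calc ∫ x in B, H x s ≤ ∫ x, H x s :=
          setIntegral_le_integral ((i1.const_mul _).add (i2.const_mul _))
            (.of_forall fun x => hH0 x s)
      _ = c * ((2 * π) ^ N * ∫ ξ, ‖g ξ‖ ^ 2)
          + (lam ^ 2)⁻¹ * ((2 * π) ^ N * ∫ ξ, ‖g' ξ‖ ^ 2) := by
          rw [hH, integral_add (i1.const_mul _) (i2.const_mul _), integral_const_mul,
            integral_const_mul, e1, e2]
      _ ≤ c * ((2 * π) ^ N * ∫ ξ, ‖g ξ‖ ^ 2)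
          + (lam ^ 2)⁻¹ * ((2 * π) ^ N * (16 * lam ^ 4 * ∫ ξ, ‖g ξ‖ ^ 2)) := by gcongr
      _ = _ := by field_simp
  calc ∫ x in B, (⨆ t ∈ Set.Icc a b, ‖nonellipticEvol sg g t x‖) ^ 2
      ≤ ∫ x in B, ∫ s in Set.Icc a b, H x s :=
        integral_mono_of_nonneg (.of_forall fun x => sq_nonneg _) hHint.integral_prod_left
          (.of_forall hsup)
    _ = ∫ s in Set.Icc a b, ∫ x in B, H x s := integral_integral_swap hHint
    _ ≤ ∫ s in Set.Icc a b, (c + 16 * lam ^ 2) * ((2 * π) ^ N * ∫ ξ, ‖g ξ‖ ^ 2) :=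
        integral_mono hHint.integral_prod_right (integrable_const _) hslice
    _ = (b - a) * ((c + 16 * lam ^ 2) * ((2 * π) ^ N * ∫ ξ, ‖g ξ‖ ^ 2)) := by
        simp [hba.le]
    _ = _ := by rw [hc]; field_simp; ring

theorem maximal_estimate_nonelliptic_short_interval
    (N : ℕ) (hN : 2 ≤ N) :
    ∃ C : ℝ, 0 < C ∧
      ∀ sg : Fin N → ℝ, (∀ i, sg i = 1 ∨ sg i = -1) →
        sg ⟨0, by omega⟩ = 1 → sg ⟨1, by omega⟩ = -1 →
      ∀ lam : ℝ, 1 ≤ lam →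
      ∀ a b : ℝ, lam ^ (-2 : ℝ) ≤ b - a → b - a ≤ lam ^ (-1 : ℝ) →
      ∀ fhat : EuclideanSpace ℝ (Fin N) → ℂ,
        Integrable (fun ξ : EuclideanSpace ℝ (Fin N) => ‖fhat ξ‖ ^ 2) →
        (Function.support fhat ⊆
          {ξ : EuclideanSpace ℝ (Fin N) | lam / 2 ≤ ‖ξ‖ ∧ ‖ξ‖ ≤ 2 * lam}) →
        Real.sqrt (∫ x in Metric.ball (0 : EuclideanSpace ℝ (Fin N)) 1,
            (⨆ t ∈ Set.Icc a b, ‖nonellipticEvol sg fhat t x‖) ^ 2) ≤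
          C * lam * Real.sqrt (b - a) *
            Real.sqrt (∫ ξ : EuclideanSpace ℝ (Fin N), ‖fhat ξ‖ ^ 2) := by
  have hK : (0 : ℝ) < 18 * (2 * π) ^ N := by positivity
  refine ⟨Real.sqrt (18 * (2 * π) ^ N), Real.sqrt_pos.2 hK, ?_⟩
  intro sg hsg _ _ lam hlam a b hlow _ fhat h2 hsupp
  have hlam0 : 0 < lam := by linarith
  have hone : 1 ≤ lam ^ 2 * (b - a) := by
    rw [Real.rpow_neg hlam0.le, Real.rpow_two] at hlow
    have := mul_le_mul_of_nonneg_left hlow (sq_nonneg lam)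
    rwa [mul_inv_cancel₀ (by positivity)] at this
  have hba : 0 < b - a := by
    by_contra h
    nlinarith [sq_nonneg lam]
  by_cases hm : AEStronglyMeasurable fhat
  · have hmain := integral_sup_sq_le hsg hlam0 (sub_pos.1 hba) hm h2
      (fun ξ hξ => (hsupp hξ).2)
    have hA : 0 ≤ (2 * π) ^ N * ∫ ξ, ‖fhat ξ‖ ^ 2 :=
      mul_nonneg (by positivity) (integral_nonneg fun ξ => sq_nonneg _)
    refine (Real.sqrt_le_sqrt (hmain.trans
      (mul_le_mul_of_nonneg_right (b := 1 + 17 * (lam ^ 2 * (b - a)))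
        (c := 18 * (lam ^ 2 * (b - a))) (by linarith) hA))).trans_eq ?_
    have e : 18 * (lam ^ 2 * (b - a)) * ((2 * π) ^ N * ∫ ξ, ‖fhat ξ‖ ^ 2)
        = 18 * (2 * π) ^ N * lam ^ 2 * (b - a) * ∫ ξ, ‖fhat ξ‖ ^ 2 := by ring
    rw [e, Real.sqrt_mul (by positivity), Real.sqrt_mul (by positivity), Real.sqrt_mul hK.le,
      Real.sqrt_sq hlam0.le]
  · -- For non-measurable data the defining integral takes the junk value `0`.
    have h0 : ∀ x : EuclideanSpace ℝ (Fin N),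
        (⨆ t ∈ Set.Icc a b, ‖nonellipticEvol sg fhat t x‖) = 0 := by
      intro x
      simp [evol_eq_zero_of_not_aestronglyMeasurable sg hm]
    simp only [h0]
    simp only [ne_eq, OfNat.ofNat_ne_zero, not_false_eq_true, zero_pow, integral_zero,
      Real.sqrt_zero]
    positivity
end
end
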